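/- arXiv:2006.03801 — 16 statements merged into one kernel-verified Lean document; each statement's English description precedes it below -/
import Mathlib

section
/- For every n ≥ 5, the complete graph K_n is not graceful. -/
/-- The induced edge label `|φ(u) − φ(v)|` of an edge, as a function on `Sym2 V`. -/
def edgeLabel {V : Type*} (φ : V → ℕ) : Sym2 V → ℕ :=
  Sym2.lift ⟨fun u v => Nat.dist (φ u) (φ v), fun u v => Nat.dist_comm (φ u) (φ v)⟩

/-- `φ` is a graceful labeling of the graph `G` with `q` edges: it is injective,
takes values in `{0, 1, ..., q}`, and the induced edge labels `|φ(u) − φ(v)|`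
form exactly the set `{1, 2, ..., q}`, each value occurring once. -/
def IsGracefulLabeling {V : Type*} (G : SimpleGraph V) (φ : V → ℕ) : Prop :=
  Function.Injective φ ∧
  (∀ v, φ v ≤ Nat.card G.edgeSet) ∧
  Set.InjOn (edgeLabel φ) G.edgeSet ∧
  edgeLabel φ '' G.edgeSet = Set.Icc 1 (Nat.card G.edgeSet)

/-- A graph is graceful if it admits a graceful labeling. -/
def IsGraceful {V : Type*} (G : SimpleGraph V) : Prop :=
  ∃ φ : V → ℕ, IsGracefulLabeling G φ

/-- A perfect ruler of length `q ≥ 10` containing `0`, `1`, `q` does not exist. -/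
lemma ruler_aux (S : ℕ → Prop) (q : ℕ) (hq : 10 ≤ q) (hle : ∀ x, S x → x ≤ q)
    (hex : ∀ d, 1 ≤ d → d ≤ q → ∃ a, S a ∧ S (a + d))
    (hun : ∀ a c d, S a → S (a + d) → S c → S (c + d) → 1 ≤ d → a = c)
    (h1 : S 1) : False := by
  have un : ∀ a b c d, S a → S b → S c → S d → a < b → c < d → b + c = d + a → a = c := by
    intro a b c d ha hb hc hd hab hcd h
    refine hun a c (b - a) ha ?_ hc ?_ (by omega)
    · rwa [show a + (b - a) = b by omega]
    · rwa [show c + (b - a) = d by omega]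
  have ex : ∀ d, d < q → ∃ a b, S a ∧ S b ∧ a ≤ d ∧ a + (q - d) = b := by
    intro d hd
    obtain ⟨a, ha, hb⟩ := hex (q - d) (by omega) (by omega)
    have := hle _ hb
    exact ⟨a, _, ha, hb, by omega, rfl⟩
  have h0q : S 0 ∧ S q := by
    obtain ⟨a, b, ha, hb, h, h'⟩ := ex 0 (by omega)
    obtain rfl : a = 0 := by omega
    obtain rfl : b = q := by omega
    exact ⟨ha, hb⟩
  obtain ⟨h0, hS⟩ := h0q
  have one : ∀ a b, S a → S b → b = a + 1 → a = 0 := by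
    intro a b ha hb h
    exact un a b 0 1 ha hb h0 h1 (by omega) (by omega) (by omega)
  have hq2 : S (q - 2) := by
    obtain ⟨a, b, ha, hb, h, h'⟩ := ex 2 (by omega)
    interval_cases a
    · rwa [show q - 2 = b by omega]
    · have := one b q hb hS (by omega); omega
    · have := one 1 2 h1 ha (by omega); omega
  have two : ∀ a b, S a → S b → b = a + 2 → a = q - 2 := by
    intro a b ha hb h
    exact un a b (q - 2) q ha hb hq2 hS (by omega) (by omega) (by omega)
  have h4 : S 4 := by
    obtain ⟨a, b, ha, hb, h, h'⟩ := ex 4 (by omega)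
    interval_cases a
    · have := two b (q - 2) hb hq2 (by omega); omega
    · have := one b (q - 2) hb hq2 (by omega); omega
    · have := one 1 2 h1 ha (by omega); omega
    · have := one b q hb hS (by omega); omega
    · exact ha
  obtain ⟨a, b, ha, hb, h, h'⟩ := ex 5 (by omega)
  interval_cases a
  · have := un b (q - 2) 1 4 hb hq2 h1 h4 (by omega) (by omega) (by omega); omega
  · have := two b (q - 2) hb hq2 (by omega); omega
  · have := one 1 2 h1 ha (by omega); omega
  · have := one 3 4 ha h4 (by omega); omega
  · have := one b q hb hS (by omega); omega
  · have := one 4 5 h4 ha (by omega); omega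

/-- There is no perfect ruler of length `q ≥ 10`. -/
lemma ruler (S : ℕ → Prop) (q : ℕ) (hq : 10 ≤ q) (hle : ∀ x, S x → x ≤ q)
    (hex : ∀ d, 1 ≤ d → d ≤ q → ∃ a, S a ∧ S (a + d))
    (hun : ∀ a c d, S a → S (a + d) → S c → S (c + d) → 1 ≤ d → a = c) : False := by
  obtain ⟨a, ha, hb⟩ := hex (q - 1) (by omega) (by omega)
  have hb' := hle _ hb
  have hcase : a = 1 ∨ a = 0 := by omega
  rcases hcase with rfl | rfl
  · exact ruler_aux S q hq hle hex hun ha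
  · refine ruler_aux (fun x => x ≤ q ∧ S (q - x)) q hq (fun x h => h.1) ?_ ?_ ?_
    · intro d h1 h2
      obtain ⟨a, ha, hb⟩ := hex d h1 h2
      have := hle _ hb
      refine ⟨q - (a + d), ⟨by omega, ?_⟩, by omega, ?_⟩
      · rwa [show q - (q - (a + d)) = a + d by omega]
      · rwa [show q - (q - (a + d) + d) = a by omega]
    · rintro a c d ⟨h1, h2⟩ ⟨h3, h4⟩ ⟨h5, h6⟩ ⟨h7, h8⟩ hd
      have := hun (q - (a + d)) (q - (c + d)) d h4
        (by rwa [show q - (a + d) + d = q - a by omega]) h8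
        (by rwa [show q - (c + d) + d = q - c by omega]) hd
      omega
    · exact ⟨by omega, by simpa using hb⟩

/-- For every `n ≥ 5`, the complete graph `K_n` is not graceful. -/
theorem completeGraph_not_graceful (n : ℕ) (hn : 5 ≤ n) :
    ¬ IsGraceful (⊤ : SimpleGraph (Fin n)) := by
  rintro ⟨φ, hinj, hle, huniq, himg⟩
  have hcard : 10 ≤ Nat.card (⊤ : SimpleGraph (Fin n)).edgeSet := by
    classical
    rw [Nat.card_eq_fintype_card, ← SimpleGraph.edgeFinset_card,
      SimpleGraph.card_edgeFinset_top_eq_card_choose_two, Fintype.card_fin]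
    calc 10 = Nat.choose 5 2 := by decide
      _ ≤ _ := Nat.choose_le_choose 2 hn
  refine ruler (fun x => ∃ v, φ v = x) _ hcard ?_ ?_ ?_
  · rintro x ⟨v, rfl⟩
    exact hle v
  · intro d h1 h2
    have hd : d ∈ edgeLabel φ '' (⊤ : SimpleGraph (Fin n)).edgeSet := by
      rw [himg]; exact ⟨h1, h2⟩
    obtain ⟨e, he, hed⟩ := hd
    induction e using Sym2.ind with
    | _ u v =>
      have hed' : Nat.dist (φ u) (φ v) = d := hed
      unfold Nat.dist at hed'
      rcases le_total (φ u) (φ v) with h | h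
      · exact ⟨φ u, ⟨u, rfl⟩, v, by omega⟩
      · exact ⟨φ v, ⟨v, rfl⟩, u, by omega⟩
  · rintro a c d ⟨u, hu⟩ ⟨v, hv⟩ ⟨w, hw⟩ ⟨x, hx⟩ hd
    have huv : u ≠ v := by rintro rfl; omega
    have hwx : w ≠ x := by rintro rfl; omega
    have hh : s(u, v) = s(w, x) := by
      apply huniq
      · simpa using huv
      · simpa using hwx
      · change Nat.dist (φ u) (φ v) = Nat.dist (φ w) (φ x)
        unfold Nat.dist
        omega
    rw [Sym2.eq_iff] at hh
    rcases hh with ⟨rfl, rfl⟩ | ⟨rfl, rfl⟩ <;> omega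
end

section
/- Let G be a finite simple graph with q ≥ 1 edges in which every vertex has even degree. If G is graceful, then q ≡ 0 (mod 4) or q ≡ 3 (mod 4); equivalently, q(q+1)/2 is even. -/
lemma edgeLabel_cast_aux {V : Type*} [Fintype V] [DecidableEq V] (φ : V → ℕ) (e : Sym2 V)
    (he : ¬ e.IsDiag) :
    ((edgeLabel φ e : ℕ) : ZMod 2) = ∑ v : V, if v ∈ e then (φ v : ZMod 2) else 0 := by
  induction e using Sym2.ind with
  | _ a b =>
    have hab : a ≠ b := by simpa using he
    have h1 : (Finset.univ.filter fun v => v ∈ s(a, b)) = {a, b} := by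
      ext v; simp
    rw [← Finset.sum_filter, h1, Finset.sum_pair hab]
    have h2 : edgeLabel φ s(a, b) = Nat.dist (φ a) (φ b) := rfl
    rw [h2, ← Nat.cast_add, ZMod.natCast_eq_natCast_iff]
    unfold Nat.dist Nat.ModEq
    omega

/-- If every vertex of a graph `G` with `q ≥ 1` edges has even degree and
`G` is graceful, then `q ≡ 0 (mod 4)` or `q ≡ 3 (mod 4)`. -/
theorem eulerian_graceful_edge_count {V : Type*} [Fintype V] (G : SimpleGraph V)
    (hq : 1 ≤ Nat.card G.edgeSet)
    (heven : ∀ v : V, Even (Nat.card (G.neighborSet v)))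
    (h : IsGraceful G) :
    Nat.card G.edgeSet % 4 = 0 ∨ Nat.card G.edgeSet % 4 = 3 := by
  classical
  obtain ⟨φ, -, -, hinj, himg⟩ := h
  have hcard : Nat.card G.edgeSet = G.edgeFinset.card := by
    rw [Nat.card_eq_fintype_card, SimpleGraph.edgeFinset_card]
  set q := Nat.card G.edgeSet with hqdef
  have himg' : G.edgeFinset.image (edgeLabel φ) = Finset.Icc 1 q := by
    apply Finset.coe_injective
    rw [Finset.coe_image, SimpleGraph.coe_edgeFinset, himg, Finset.coe_Icc]
  have hsum : ∑ e ∈ G.edgeFinset, edgeLabel φ e = ∑ i ∈ Finset.Icc 1 q, i := by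
    rw [← himg', Finset.sum_image]
    rw [SimpleGraph.coe_edgeFinset]
    exact hinj
  have hz : ((∑ e ∈ G.edgeFinset, edgeLabel φ e : ℕ) : ZMod 2) = 0 := by
    rw [Nat.cast_sum, Finset.sum_congr rfl (fun e he => edgeLabel_cast_aux φ e
      (G.not_isDiag_of_mem_edgeFinset he)), Finset.sum_comm]
    apply Finset.sum_eq_zero
    intro v _
    rw [← Finset.sum_filter, Finset.sum_const, ← SimpleGraph.incidenceFinset_eq_filter,
      SimpleGraph.card_incidenceFinset_eq_degree, nsmul_eq_mul]
    have h1 := heven v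
    rw [Nat.card_eq_fintype_card, SimpleGraph.card_neighborSet_eq_degree] at h1
    rw [(ZMod.natCast_eq_zero_iff_even).2 h1, zero_mul]
  rw [hsum, ZMod.natCast_eq_zero_iff_even] at hz
  have hg : ∀ n : ℕ, (∑ i ∈ Finset.Icc 1 n, i) * 2 = n * (n + 1) := by
    intro n
    induction n with
    | zero => simp
    | succ k ih => rw [Finset.sum_Icc_succ_top (by omega), add_mul, ih]; ring
  have h2 := hg q
  obtain ⟨k, hk⟩ := hz
  rw [hk] at h2
  have h3 : (q * (q + 1)) % 4 = 0 := by omega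
  have h4 : q % 4 < 4 := Nat.mod_lt _ (by norm_num)
  rw [Nat.mul_mod, Nat.add_mod] at h3
  generalize q % 4 = r at *
  interval_cases r <;> simp_all
end

section
/- For every n ≥ 3 with n ≡ 1 (mod 4) or n ≡ 2 (mod 4), the cycle C_n on n vertices is not graceful. -/
open Finset in
theorem graceful_aux (m : ℕ) (hm : (m+3) % 4 = 1 ∨ (m+3) % 4 = 2) :
    ¬ IsGraceful (SimpleGraph.cycleGraph (m+3)) := by
  rintro ⟨φ, -, -, hinj, himg⟩
  let e : Fin (m+3) → Sym2 (Fin (m+3)) := fun i => s(i, i+1)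
  have hrange : (SimpleGraph.cycleGraph (m+3)).edgeSet = Set.range e := by
    ext x
    induction x using Sym2.ind with
    | _ u v =>
      simp only [SimpleGraph.mem_edgeSet, SimpleGraph.cycleGraph_adj, Set.mem_range, e, Sym2.eq_iff]
      constructor
      · rintro (h | h)
        · exact ⟨v, Or.inr ⟨rfl, by rw [← h]; abel⟩⟩
        · exact ⟨u, Or.inl ⟨rfl, by rw [← h]; abel⟩⟩
      · rintro ⟨y, ⟨rfl, rfl⟩ | ⟨rfl, rfl⟩⟩
        · right; abel
        · left; abel
  have he : Function.Injective e := by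
    intro i j hij
    simp only [e, Sym2.eq_iff] at hij
    rcases hij with ⟨h, -⟩ | ⟨h1, h2⟩
    · exact h
    · exfalso
      subst h1
      have h3 : (1 : Fin (m+3)) + 1 = 0 := by
        have : j + (1 + 1) = j + 0 := by rw [← add_assoc, h2, add_zero]
        exact add_left_cancel this
      have h4 := congrArg Fin.val h3
      rw [Fin.val_add] at h4
      simp at h4
      rw [Nat.mod_eq_of_lt (by omega)] at h4
      omega
  have hcard : Nat.card (SimpleGraph.cycleGraph (m+3)).edgeSet = m+3 := by
    rw [hrange, Nat.card_range_of_injective he, Nat.card_eq_fintype_card, Fintype.card_fin]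
  rw [hcard] at himg
  rw [hrange] at himg hinj
  have hf : Function.Injective (fun i => edgeLabel φ (e i)) := by
    intro i j hij
    exact he (hinj ⟨i, rfl⟩ ⟨j, rfl⟩ hij)
  have hset : univ.image (fun i => edgeLabel φ (e i)) = Icc 1 (m+3) := by
    apply Finset.coe_injective
    rw [Finset.coe_image, Finset.coe_univ, Finset.coe_Icc, ← himg, ← Set.range_comp, Set.image_univ]
    rfl
  have hsum : ∑ i, edgeLabel φ (e i) = ∑ k ∈ Icc 1 (m+3), k := by
    rw [← hset, Finset.sum_image (fun a _ b _ hab => hf hab)]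
  have hpar : ((∑ i, edgeLabel φ (e i) : ℕ) : ZMod 2) = 0 := by
    have h1 : ∀ i, ((edgeLabel φ (e i) : ℕ) : ZMod 2) = (φ i : ZMod 2) + (φ (i+1) : ZMod 2) := by
      intro i
      have : edgeLabel φ (e i) = Nat.dist (φ i) (φ (i+1)) := rfl
      rw [this, ← Nat.cast_add, ZMod.natCast_eq_natCast_iff, Nat.ModEq, Nat.dist]
      omega
    have h2 : ∑ i, (φ (i+1) : ZMod 2) = ∑ i, (φ i : ZMod 2) :=
      Equiv.sum_comp (Equiv.addRight (1 : Fin (m+3))) (fun i => (φ i : ZMod 2))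
    rw [Nat.cast_sum, Finset.sum_congr rfl (fun i _ => h1 i), Finset.sum_add_distrib, h2]
    exact CharTwo.add_self_eq_zero _
  rw [hsum, ZMod.natCast_eq_zero_iff] at hpar
  have hg : ∀ n : ℕ, (∑ k ∈ Icc 1 n, k) % 2 = if n % 4 = 1 ∨ n % 4 = 2 then 1 else 0 := by
    intro n
    induction n with
    | zero => simp
    | succ n ih =>
      rw [Finset.sum_Icc_succ_top (by omega)]
      split_ifs at ih ⊢ <;> omega
  have := hg (m+3)
  rw [if_pos hm] at this
  omega

/-- For `n ≥ 3` with `n ≡ 1` or `2 (mod 4)`, the cycle `C_n` is not graceful. -/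
theorem cycleGraph_not_graceful (n : ℕ) (hn : 3 ≤ n)
    (h : n % 4 = 1 ∨ n % 4 = 2) :
    ¬ IsGraceful (SimpleGraph.cycleGraph n) := by
  obtain ⟨m, rfl⟩ : ∃ m, n = m + 3 := ⟨n - 3, by omega⟩
  exact graceful_aux m h
end

section
/- Let m, n ≥ 3 with m ≡ 3 (mod 4) and n ≡ 3 (mod 4), and let G be the graph obtained from vertex-disjoint cycles C_m and C_n by identifying one vertex of C_m with one vertex of C_n (so G consists of two cycles having exactly one vertex in common, with m + n − 1 vertices and m + n edges). Then G is not graceful. -/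
/-- Modulo 2, the labels along a walk add up to the sum of the end labels. -/
theorem walk_label_sum_mod_two {V : Type*} {G : SimpleGraph V} (φ : V → ℕ) {u w : V}
    (p : G.Walk u w) : ((p.edges.map (edgeLabel φ)).sum + φ u + φ w) % 2 = 0 := by
  induction p with
  | nil => simp; omega
  | cons h p ih =>
    simp only [SimpleGraph.Walk.edges_cons, List.map_cons, List.sum_cons]
    simp only [edgeLabel, Sym2.lift_mk, Nat.dist] at *
    omega

/-- If `G` consists of two cycles, of lengths `m ≡ 3 (mod 4)` and
`n ≡ 3 (mod 4)`, sharing exactly one vertex `v` (so `G` has all its vertices and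
edges on the two cycles, which meet only at `v`), then `G` is not graceful. -/
theorem two_cycles_one_common_vertex_not_graceful {V : Type*} [Fintype V]
    (G : SimpleGraph V) (m n : ℕ) (hm : 3 ≤ m) (hn : 3 ≤ n)
    (hm4 : m % 4 = 3) (hn4 : n % 4 = 3) (v : V)
    (c₁ c₂ : G.Walk v v) (hc₁ : c₁.IsCycle) (hc₂ : c₂.IsCycle)
    (hl₁ : c₁.length = m) (hl₂ : c₂.length = n)
    (hcommon : ∀ x : V, x ∈ c₁.support → x ∈ c₂.support → x = v)
    (hcover : ∀ x : V, x ∈ c₁.support ∨ x ∈ c₂.support)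
    (hedges : ∀ e ∈ G.edgeSet, e ∈ c₁.edges ∨ e ∈ c₂.edges) :
    ¬ IsGraceful G := by
  classical
  rintro ⟨φ, -, -, hinj, himg⟩
  have hdisj : ∀ e ∈ c₁.edges, e ∉ c₂.edges := by
    intro e
    induction e using Sym2.ind with
    | _ a b =>
      intro h1 h2
      have ha := hcommon a (c₁.fst_mem_support_of_mem_edges h1)
        (c₂.fst_mem_support_of_mem_edges h2)
      have hb := hcommon b (c₁.snd_mem_support_of_mem_edges h1)
        (c₂.snd_mem_support_of_mem_edges h2)
      have hadj := c₁.adj_of_mem_edges h1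
      rw [ha, hb] at hadj
      exact G.loopless.irrefl _ hadj
  have hnd : (c₁.edges ++ c₂.edges).Nodup := by
    refine List.Nodup.append hc₁.edges_nodup hc₂.edges_nodup ?_
    intro e h1 h2
    exact hdisj e h1 h2
  have hset : G.edgeSet = ((c₁.edges ++ c₂.edges).toFinset : Set (Sym2 V)) := by
    ext e
    simp only [List.coe_toFinset, List.mem_append, Set.mem_setOf_eq]
    exact ⟨hedges e, fun h => h.elim (fun h => c₁.edges_subset_edgeSet h)
      (fun h => c₂.edges_subset_edgeSet h)⟩
  have hcard : Nat.card G.edgeSet = m + n := by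
    rw [Nat.card_coe_set_eq, hset, Set.ncard_coe_finset, List.toFinset_card_of_nodup hnd]
    simp [hl₁, hl₂]
  rw [hcard, hset, ← Finset.coe_image, ← Finset.coe_Icc, Finset.coe_inj] at himg
  rw [hset] at hinj
  have hsum : ∑ i ∈ Finset.Icc 1 (m + n), i =
      (c₁.edges.map (edgeLabel φ)).sum + (c₂.edges.map (edgeLabel φ)).sum := by
    rw [← himg, Finset.sum_image hinj, List.sum_toFinset _ hnd]
    simp
  have h1 := walk_label_sum_mod_two φ c₁
  have h2 := walk_label_sum_mod_two φ c₂
  have hg : ∀ k : ℕ, (∑ i ∈ Finset.Icc 1 (4 * k + 2), i) % 2 = 1 := by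
    intro k
    induction k with
    | zero => decide
    | succ k ih =>
      rw [show 4 * (k + 1) + 2 = 4 * k + 2 + 1 + 1 + 1 + 1 by ring]
      iterate 4 rw [Finset.sum_Icc_succ_top (by omega)]
      omega
  have h3 := hg ((m + n) / 4)
  rw [show 4 * ((m + n) / 4) + 2 = m + n by omega] at h3
  omega
end

section
/- Let n ≥ 5 with n ≡ 1 (mod 4) or n ≡ 2 (mod 4). Then the cycle C_n is not graceful, while every proper connected subgraph of C_n (in particular, the path obtained by deleting any single edge of C_n) is graceful; that is, C_n is critically non-graceful. -/
open SimpleGraph in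
lemma graceful_of_consecutive {V : Type*} [Finite V] (G : SimpleGraph V) (hG : G.Connected)
    (f : V → ℕ) (hf : Function.Injective f)
    (hadj : ∀ u v, G.Adj u v → f v = f u + 1 ∨ f u = f v + 1) : IsGraceful G := by
  have := hG.nonempty
  obtain ⟨x, hx⟩ := Finite.exists_min f
  obtain ⟨y, hy⟩ := Finite.exists_max f
  have hxy := hx y
  -- every unit step between the extremes is an edge
  have hcross : ∀ k, f x ≤ k → k < f y → ∃ u v, G.Adj u v ∧ f u = k ∧ f v = k + 1 := by
    intro k h1 h2
    obtain ⟨p⟩ := hG.preconnected x y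
    obtain ⟨d, -, hd1, hd2⟩ := p.exists_boundary_dart {v | f v ≤ k} h1 (by simpa using h2)
    have := hadj _ _ d.adj
    simp only [Set.mem_ofPred_eq] at hd1 hd2
    exact ⟨d.fst, d.snd, d.adj, by omega, by omega⟩
  let φ : V → ℕ := fun v =>
    if (f v - f x) % 2 = 0 then (f v - f x) / 2 else (f y - f x) - (f v - f x) / 2
  have hlab : ∀ u v, f v = f u + 1 → edgeLabel φ s(u, v) = f y - f u := by
    intro u v huv
    have h1 := hx u
    have h2 := hy v
    simp only [edgeLabel, Sym2.lift_mk, Nat.dist, φ]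
    split_ifs <;> omega
  have hrep : ∀ e ∈ G.edgeSet, ∃ u v, e = s(u, v) ∧ f v = f u + 1 := by
    intro e he
    induction e with
    | _ u v =>
      rcases hadj u v he with h | h
      · exact ⟨u, v, rfl, h⟩
      · exact ⟨v, u, Sym2.eq_swap, h⟩
  have hinj : Set.InjOn (edgeLabel φ) G.edgeSet := by
    intro e he e' he' hee
    obtain ⟨u, v, rfl, huv⟩ := hrep e he
    obtain ⟨u', v', rfl, huv'⟩ := hrep e' he'
    rw [hlab _ _ huv, hlab _ _ huv'] at hee
    have h1 := hy v
    have h2 := hy v'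
    have : u = u' := hf (by omega)
    have : v = v' := hf (by omega)
    simp_all
  have himg : edgeLabel φ '' G.edgeSet = Set.Icc 1 (f y - f x) := by
    ext k
    simp only [Set.mem_image, Set.mem_Icc]
    constructor
    · rintro ⟨e, he, rfl⟩
      obtain ⟨u, v, rfl, huv⟩ := hrep e he
      rw [hlab _ _ huv]
      have h1 := hy v
      have h2 := hx u
      omega
    · rintro ⟨h1, h2⟩
      obtain ⟨u, v, huv, hu, hv⟩ := hcross (f y - k) (by omega) (by omega)
      refine ⟨s(u, v), huv, ?_⟩
      rw [hlab _ _ (by omega)]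
      omega
  have hcard : Nat.card G.edgeSet = f y - f x := by
    have := hinj.ncard_image
    rw [himg] at this
    rw [Nat.card_coe_set_eq, ← this, Set.ncard_eq_toFinset_card']
    simp
  refine ⟨φ, ?_, ?_, hinj, by rw [hcard, himg]⟩
  · intro u v huv
    apply hf
    have h1 := hx u
    have h2 := hx v
    have h3 := hy u
    have h4 := hy v
    simp only [φ] at huv
    split_ifs at huv <;> omega
  · intro v
    have h1 := hx v
    have h3 := hy v
    rw [hcard]
    simp only [φ]
    split_ifs <;> omega

lemma cycle_edge_exists (m : ℕ) (e : Sym2 (Fin (m + 2)))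
    (he : e ∈ (SimpleGraph.cycleGraph (m + 2)).edgeSet) : ∃ i, e = s(i, i + 1) := by
  induction e with
  | _ u v =>
    rw [SimpleGraph.mem_edgeSet, SimpleGraph.cycleGraph_adj] at he
    rcases he with h | h
    · exact ⟨v, by rw [← h, add_sub_cancel, Sym2.eq_swap]⟩
    · exact ⟨u, by rw [← h, add_sub_cancel]⟩

lemma cycle_adj_succ (m : ℕ) (i : Fin (m + 2)) :
    (SimpleGraph.cycleGraph (m + 2)).Adj i (i + 1) := by
  rw [SimpleGraph.cycleGraph_adj]
  right
  simp

lemma cycle_edge_inj (m : ℕ) (hm : 1 ≤ m) :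
    Function.Injective (fun i : Fin (m + 2) => s(i, i + 1)) := by
  intro i j hij
  simp only [Sym2.eq_iff] at hij
  rcases hij with h | ⟨h1, h2⟩
  · exact h.1
  · exfalso
    rw [h1, add_assoc] at h2
    have h3 : (1 + 1 : Fin (m + 2)) = 0 := by simpa using h2
    have h4 := congrArg Fin.val h3
    rw [Fin.val_add] at h4
    simp only [Fin.val_one, Fin.val_zero] at h4
    rw [Nat.mod_eq_of_lt (by omega)] at h4
    omega

lemma cycle_not_graceful (m : ℕ) (hm : 1 ≤ m) (h : (m + 2) % 4 = 1 ∨ (m + 2) % 4 = 2) :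
    ¬ IsGraceful (SimpleGraph.cycleGraph (m + 2)) := by
  rintro ⟨φ, -, -, hinj, himg⟩
  have hE : (SimpleGraph.cycleGraph (m + 2)).edgeSet
      = Set.range (fun i : Fin (m + 2) => s(i, i + 1)) := by
    ext e
    constructor
    · intro he
      obtain ⟨i, rfl⟩ := cycle_edge_exists m e he
      exact ⟨i, rfl⟩
    · rintro ⟨i, rfl⟩
      exact cycle_adj_succ m i
  have hcard : Nat.card (SimpleGraph.cycleGraph (m + 2)).edgeSet = m + 2 := by
    rw [hE, Nat.card_range_of_injective (cycle_edge_inj m hm)]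
    simp
  rw [hcard] at himg
  let g : Fin (m + 2) → ℕ := fun i => edgeLabel φ s(i, i + 1)
  have hg : Function.Injective g := fun i j hij =>
    cycle_edge_inj m hm (hinj (cycle_adj_succ m i) (cycle_adj_succ m j) hij)
  have hgi : Finset.univ.image g = Finset.Icc 1 (m + 2) := by
    rw [← Finset.coe_inj, Finset.coe_image, Finset.coe_univ, Set.image_univ, Finset.coe_Icc,
      ← himg, hE, ← Set.range_comp]
    rfl
  have hsum : ∑ i, g i = ∑ k ∈ Finset.Icc 1 (m + 2), k := by
    rw [← hgi, Finset.sum_image (fun i _ j _ hij => hg hij)]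
  have hpar : ((∑ i, g i : ℕ) : ZMod 2) = 0 := by
    have h1 : ∀ i, ((g i : ℕ) : ZMod 2) = (φ i : ZMod 2) + (φ (i + 1) : ZMod 2) := by
      intro i
      rw [← Nat.cast_add, ZMod.natCast_eq_natCast_iff']
      simp only [g, edgeLabel, Sym2.lift_mk, Nat.dist]
      omega
    rw [Nat.cast_sum, Finset.sum_congr rfl (fun i _ => h1 i), Finset.sum_add_distrib]
    have h5 : ∑ i : Fin (m + 2), (φ (i + 1) : ZMod 2) = ∑ i, (φ i : ZMod 2) :=
      Equiv.sum_comp (Equiv.addRight (1 : Fin (m + 2))) (fun i => (φ i : ZMod 2))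
    rw [h5]
    exact CharTwo.add_self_eq_zero _
  rw [hsum, ZMod.natCast_eq_zero_iff] at hpar
  have h2 : ∀ N : ℕ, (∑ k ∈ Finset.Icc 1 N, k) * 2 = N * (N + 1) := by
    intro N
    induction N with
    | zero => simp
    | succ N ih =>
      rw [Finset.sum_Icc_succ_top (by omega), add_mul, ih]
      ring
  have h3 := h2 (m + 2)
  obtain ⟨c, hc⟩ := hpar
  rw [hc] at h3
  clear hsum hgi hg g hcard hE himg hinj φ hc
  generalize m + 2 = N at *
  have h4 : (N * (N + 1)) % 4 = 0 := by omega
  rw [Nat.mul_mod, Nat.add_mod] at h4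
  rcases h with h | h <;> simp [h] at h4

lemma cycle_sub_graceful (m : ℕ) (H : (SimpleGraph.cycleGraph (m + 2)).Subgraph)
    (hH : H ≠ ⊤) (hc : H.coe.Connected) : IsGraceful H.coe := by
  obtain ⟨i, hi⟩ : ∃ i, ¬ H.Adj i (i + 1) := by
    by_contra! hall
    apply hH
    have key : ∀ u v, (SimpleGraph.cycleGraph (m + 2)).Adj u v → H.Adj u v := by
      intro u v huv
      obtain ⟨i, hi⟩ := cycle_edge_exists m s(u, v) huv
      have h1 : s(i, i + 1) ∈ H.edgeSet := hall i
      rw [← hi] at h1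
      exact h1
    ext u v
    · simpa using (hall u).fst_mem
    · exact ⟨fun h => h.adj_sub, fun h => key u v h⟩
  have step : ∀ u : Fin (m + 2), u ≠ i →
      (u + 1 - (i + 1)).val = (u - (i + 1)).val + 1 := by
    intro u hu
    have h1 : u + 1 - (i + 1) = (u - (i + 1)) + 1 := by abel
    rw [h1, Fin.val_add_one, if_neg]
    intro h2
    apply hu
    have h3 : u - (i + 1) + 1 = 0 := by rw [h2]; exact Fin.last_add_one _
    have h4 : u - i = 0 := by rw [← h3]; abel
    exact sub_eq_zero.mp h4
  refine graceful_of_consecutive H.coe hc (fun v => (v.1 - (i + 1)).val) ?_ ?_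
  · intro u v huv
    have := Fin.val_injective huv
    exact Subtype.ext (by simpa using this)
  · rintro ⟨u, hu⟩ ⟨v, hv⟩ huv
    have huv' : H.Adj u v := huv
    have h1 := huv'.adj_sub
    rw [SimpleGraph.cycleGraph_adj] at h1
    rcases h1 with h1 | h1
    · right
      obtain rfl : u = v + 1 := by rw [← h1, add_sub_cancel]
      exact step v (by rintro rfl; exact hi huv'.symm)
    · left
      obtain rfl : v = u + 1 := by rw [← h1, add_sub_cancel]
      exact step u (by rintro rfl; exact hi huv')

/-- For `n ≥ 5` with `n ≡ 1` or `2 (mod 4)`, the cycle `C_n` is not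
graceful while every proper connected subgraph of it is graceful: `C_n` is
critically non-graceful. -/
theorem cycleGraph_critically_non_graceful (n : ℕ) (hn : 5 ≤ n)
    (h : n % 4 = 1 ∨ n % 4 = 2) :
    ¬ IsGraceful (SimpleGraph.cycleGraph n) ∧
    ∀ H : (SimpleGraph.cycleGraph n).Subgraph,
      H ≠ ⊤ → H.coe.Connected → IsGraceful H.coe := by
  obtain ⟨m, rfl⟩ : ∃ m, n = m + 2 := ⟨n - 2, by omega⟩
  exact ⟨cycle_not_graceful m (by omega) h, fun H => cycle_sub_graceful m H⟩
end

section
/- Let P be the path with n edges (hence n + 1 vertices), where n ≥ 8. Then for every vertex u of P and every integer i with 0 ≤ i ≤ n, there exists a graceful labeling α of P such that α(u) = i; that is, every vertex of a sufficiently long path is i-attractive for every admissible label i. -/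
/-- absolute difference of naturals -/
def ad (a b : ℕ) : ℕ := a - b + (b - a)

/-- graceful sequence on positions `0..n` -/
def Gr (n : ℕ) (f : ℕ → ℕ) : Prop :=
  (∀ j, j ≤ n → f j ≤ n) ∧ (∀ j k, j ≤ n → k ≤ n → f j = f k → j = k) ∧
  (∀ j k, j < n → k < n → ad (f j) (f (j+1)) = ad (f k) (f (k+1)) → j = k)

/-- graceful sequence whose edges all cross the threshold `c` -/
def Al (n c : ℕ) (f : ℕ → ℕ) : Prop :=
  Gr n f ∧ c ≤ n + 1 ∧ ∀ j, j < n → (f j < c ↔ ¬ f (j+1) < c)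

theorem Gr.rev {n f} (h : Gr n f) : Gr n (fun j => f (n - j)) := by
  obtain ⟨h1, h2, h3⟩ := h
  refine ⟨fun j hj => h1 _ (by omega), fun j k hj hk e => ?_, fun j k hj hk e => ?_⟩
  · have := h2 (n-j) (n-k) (by omega) (by omega) e; omega
  · have e1 : n - j = n - (j+1) + 1 := by omega
    have e2 : n - k = n - (k+1) + 1 := by omega
    simp only [e1, e2] at e
    have := h3 (n-(j+1)) (n-(k+1)) (by omega) (by omega) (by unfold ad at *; omega); omega

theorem Gr.com {n f} (h : Gr n f) : Gr n (fun j => n - f j) := by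
  obtain ⟨h1, h2, h3⟩ := h
  refine ⟨fun j hj => by simp, fun j k hj hk e => ?_, fun j k hj hk e => ?_⟩
  · have := h1 j hj; have := h1 k hk
    exact h2 j k hj hk (by simp only at e; omega)
  · have := h1 j (by omega); have := h1 k (by omega)
    have := h1 (j+1) (by omega); have := h1 (k+1) (by omega)
    exact h3 j k hj hk (by unfold ad at *; simp only at e; omega)

theorem Al.rev {n c f} (h : Al n c f) : Al n c (fun j => f (n - j)) := by
  refine ⟨h.1.rev, h.2.1, fun j hj => ?_⟩
  have e1 : n - j = n - (j+1) + 1 := by omega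
  simp only [e1]
  have := h.2.2 (n-(j+1)) (by omega)
  tauto

theorem Al.com {n c f} (h : Al n c f) : Al n (n + 1 - c) (fun j => n - f j) := by
  refine ⟨h.1.com, by omega, fun j hj => ?_⟩
  have := h.2.2 j hj
  have := h.2.1
  have := h.1.1 j (by omega); have := h.1.1 (j+1) (by omega)
  simp only
  omega

theorem Al.inv {n c f} (h : Al n c f) : Al n c (fun j => if f j < c then c - 1 - f j else n + c - f j) := by
  have hc := h.2.1
  refine ⟨⟨fun j hj => ?_, fun j k hj hk e => ?_, fun j k hj hk e => ?_⟩, h.2.1, fun j hj => ?_⟩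
  · have := h.1.1 j hj
    simp only; split_ifs <;> omega
  · have := h.1.1 j hj; have := h.1.1 k hk
    refine h.1.2.1 j k hj hk ?_
    simp only at e; split_ifs at e <;> omega
  · have key : ∀ j, j < n → ad (if f j < c then c - 1 - f j else n + c - f j)
        (if f (j+1) < c then c - 1 - f (j+1) else n + c - f (j+1)) + ad (f j) (f (j+1)) = n + 1 := by
      intro j hj
      have := h.1.1 j (by omega)
      have := h.1.1 (j+1) (by omega)
      have := h.2.2 j hj
      unfold ad
      by_cases h1 : f j < c
      · rw [if_pos h1, if_neg (by omega)]; omega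
      · rw [if_neg h1, if_pos (by omega)]; omega
    have h1 := key j hj
    have h2 := key k hk
    simp only at e
    exact h.1.2.2 j k hj hk (by omega)
  · have := h.1.1 j (by omega)
    have := h.1.1 (j+1) (by omega)
    have := h.2.2 j hj
    simp only
    split_ifs <;> omega

/-- zigzag -/
def zz (n j : ℕ) : ℕ := if j % 2 = 0 then j / 2 else n - j / 2

theorem zz_al (n : ℕ) : Al n (n/2+1) (zz n) := by
  refine ⟨⟨fun j hj => ?_, fun j k hj hk e => ?_, fun j k hj hk e => ?_⟩, by omega, fun j hj => ?_⟩
  · unfold zz; split_ifs <;> omega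
  · unfold zz at e; split_ifs at e <;> omega
  · unfold zz ad at e; split_ifs at e <;> omega
  · unfold zz; split_ifs <;> omega

/-- composition: insert `B` into the gap of `A` -/
def cmpo (a m c : ℕ) (A B : ℕ → ℕ) (j : ℕ) : ℕ :=
  if j ≤ a then (if A j < c then A j else A j + m + 1) else c + B (j - a - 1)

theorem cmpo_lo {a m c A B j} (hj : j ≤ a) (h : A j < c) : cmpo a m c A B j = A j := by
  simp [cmpo, hj, h]
theorem cmpo_hi {a m c A B j} (hj : j ≤ a) (h : c ≤ A j) : cmpo a m c A B j = A j + m + 1 := by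
  simp [cmpo, hj, Nat.not_lt.2 h]
theorem cmpo_in {a m c A B} (j : ℕ) : cmpo a m c A B (a + 1 + j) = c + B j := by
  have : a + 1 + j - a - 1 = j := by omega
  rw [cmpo, if_neg (by omega), this]

theorem cmpo_gr {a m c A B} (hA : Al a c A) (hB : Gr m B)
    (hj : (A a < c ∧ c + B 0 = A a + m + 1) ∨ (c ≤ A a ∧ A a = c + B 0)) :
    Gr (a + m + 1) (cmpo a m c A B) := by
  have hc := hA.2.1
  have ho : ∀ j, j ≤ a → (A j < c ∧ cmpo a m c A B j = A j) ∨ (c ≤ A j ∧ A j ≤ a ∧ cmpo a m c A B j = A j + m + 1) := by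
    intro j hj
    have := hA.1.1 j hj
    by_cases h : A j < c
    · left; exact ⟨h, cmpo_lo hj h⟩
    · right; exact ⟨by omega, this, cmpo_hi hj (by omega)⟩
  have hi : ∀ j, a < j → j ≤ a + m + 1 → B (j-a-1) ≤ m ∧ cmpo a m c A B j = c + B (j-a-1) := by
    intro j h1 h2
    refine ⟨hB.1 _ (by omega), ?_⟩
    simp [cmpo, Nat.not_le.2 h1]
  have e1 : ∀ j, j < a → ad (cmpo a m c A B j) (cmpo a m c A B (j+1)) = ad (A j) (A (j+1)) + m + 1
      ∧ 1 ≤ ad (A j) (A (j+1)) := by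
    intro j hj
    have h1 := ho j (by omega); have h2 := ho (j+1) (by omega)
    have h3 := hA.2.2 j hj
    unfold ad; omega
  have e2 : ad (cmpo a m c A B a) (cmpo a m c A B (a+1)) = m + 1 := by
    have h1 := ho a le_rfl; have h2 := hi (a+1) (by omega) (by omega)
    have : a + 1 - a - 1 = 0 := by omega
    rw [this] at h2
    unfold ad; omega
  have e3 : ∀ j, a < j → j < a + m + 1 → ad (cmpo a m c A B j) (cmpo a m c A B (j+1)) = ad (B (j-a-1)) (B (j-a-1+1))
      ∧ ad (B (j-a-1)) (B (j-a-1+1)) ≤ m := by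
    intro j h1 h2
    have h3 := hi j (by omega) (by omega); have h4 := hi (j+1) (by omega) (by omega)
    have : j + 1 - a - 1 = j - a - 1 + 1 := by omega
    rw [this] at h4
    unfold ad; omega
  refine ⟨fun j hj => ?_, fun j k hj hk e => ?_, fun j k hj hk e => ?_⟩
  · rcases Nat.lt_or_ge a j with h | h
    · have := hi j h hj; omega
    · have := ho j h; omega
  · rcases Nat.lt_or_ge a j with h | h <;> rcases Nat.lt_or_ge a k with h' | h'
    · have h1 := hi j h hj; have h2 := hi k h' hk
      have := hB.2.1 (j-a-1) (k-a-1) (by omega) (by omega) (by omega); omega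
    · have h1 := hi j h hj; have h2 := ho k h'; omega
    · have h1 := ho j h; have h2 := hi k h' hk; omega
    · have h1 := ho j h; have h2 := ho k h'
      exact hA.1.2.1 j k h h' (by omega)
  · rcases Nat.lt_trichotomy a j with h | h | h <;> rcases Nat.lt_trichotomy a k with h' | h' | h'
    · have h1 := e3 j h hj; have h2 := e3 k h' hk
      have := hB.2.2 (j-a-1) (k-a-1) (by omega) (by omega) (by omega); omega
    · have h1 := e3 j h hj; subst h'; omega
    · have h1 := e3 j h hj; have h2 := e1 k h'; omega
    · have h1 := e3 k h' hk; subst h; omega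
    · omega
    · have h1 := e1 k h'; subst h; omega
    · have h1 := e1 j h; have h2 := e3 k h' hk; omega
    · have h1 := e1 j h; subst h'; omega
    · have h1 := e1 j h; have h2 := e1 k h'
      exact hA.1.2.2 j k h h' (by omega)

theorem cmpo_al {a m c d A B} (hA : Al a c A) (hB : Al m d B)
    (hj : (A a < c ∧ c + B 0 = A a + m + 1 ∧ d ≤ B 0) ∨ (c ≤ A a ∧ A a = c + B 0 ∧ B 0 < d)) :
    Al (a + m + 1) (c + d) (cmpo a m c A B) := by
  have hc := hA.2.1
  have hd := hB.2.1
  refine ⟨cmpo_gr hA hB.1 (by omega), by omega, fun j hj' => ?_⟩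
  rcases Nat.lt_trichotomy a j with h | h | h
  · have := hB.2.2 (j-a-1) (by omega)
    obtain ⟨k, rfl⟩ : ∃ k, j = a + 1 + k := ⟨j - a - 1, by omega⟩
    have := hB.2.2 k (by omega)
    rw [cmpo_in, show a + 1 + k + 1 = a + 1 + (k+1) by omega, cmpo_in]; omega
  · subst h
    have e := cmpo_in (a := a) (m := m) (c := c) (A := A) (B := B) 0
    simp only [add_zero] at e
    rcases hj with h | h
    · rw [cmpo_lo le_rfl h.1, e]; omega
    · rw [cmpo_hi le_rfl h.1, e]; omega
  · have := hA.2.2 j h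
    have h1 := hA.1.1 j (by omega); have h2 := hA.1.1 (j+1) (by omega)
    by_cases h3 : A j < c
    · have h4 : c ≤ A (j+1) := by omega
      rw [cmpo_lo h.le h3, cmpo_hi (Nat.succ_le_of_lt h) h4, Nat.succ_eq_add_one]; omega
    · have h4 : A (j+1) < c := by omega
      rw [cmpo_hi h.le (by omega), cmpo_lo (Nat.succ_le_of_lt h) h4, Nat.succ_eq_add_one]; omega

/-- zigzag from centre `e` down to `0` on `2e` edges -/
theorem z_even (e : ℕ) : ∃ f, Al (2*e) (e+1) f ∧ f 0 = e ∧ f (2*e) = 0 := by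
  have h := (zz_al (2*e)).rev
  have : 2*e/2 = e := by omega
  rw [this] at h
  exact ⟨_, h, by simp [zz], by simp [zz]⟩

/-- zigzag from `e` to the top on `2e+1` edges -/
theorem z_odd (e : ℕ) : ∃ f, Al (2*e+1) (e+1) f ∧ f 0 = e ∧ f (2*e+1) = 2*e+1 := by
  have h := (zz_al (2*e+1)).rev.com
  have : 2*e+1+1-((2*e+1)/2+1) = e+1 := by omega
  rw [this] at h
  refine ⟨_, h, ?_, by simp [zz]⟩
  simp only [zz]; split_ifs <;> omega

theorem AE (n e : ℕ) : e ≤ n / 2 → ¬ (n = 4*e ∧ 0 < e) → ∃ f, Al n (n/2+1) f ∧ f 0 = e := by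
  induction n using Nat.strong_induction_on generalizing e with
  | _ n ih =>
  have main : ∀ e, e ≤ n/2 → (e = 0 ∨ 4*e+1 ≤ n) → ∃ f, Al n (n/2+1) f ∧ f 0 = e := by
    intro e he h
    rcases Nat.eq_zero_or_pos e with h0 | h0
    · subst h0; exact ⟨_, zz_al n, by simp [zz]⟩
    by_cases hn : n = 6*e+1
    · obtain ⟨A, hA, hA0, hA1⟩ := z_odd e
      obtain ⟨B, hB, hB0⟩ := ih (n-2*e-2) (by omega) e (by omega) (by omega)
      have := cmpo_al hA hB (by omega)
      have e1 : 2*e+1 + (n-2*e-2) + 1 = n := by omega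
      have e2 : e + 1 + ((n-2*e-2)/2+1) = n/2+1 := by omega
      rw [e1, e2] at this
      exact ⟨_, this, by rw [cmpo_lo (by omega) (by omega), hA0]⟩
    · obtain ⟨A, hA, hA0, hA1⟩ := z_even e
      obtain ⟨B, hB, hB0⟩ := ih (n-2*e-1) (by omega) e (by omega) (by omega)
      have := cmpo_al hA hB.com (by omega)
      have e1 : 2*e + (n-2*e-1) + 1 = n := by omega
      have e2 : e + 1 + ((n-2*e-1) + 1 - ((n-2*e-1)/2+1)) = n/2+1 := by omega
      rw [e1, e2] at this
      exact ⟨_, this, by rw [cmpo_lo (by omega) (by omega), hA0]⟩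
  intro he hne
  by_cases h : e = 0 ∨ 4*e+1 ≤ n
  · exact main e he h
  · obtain ⟨f, hf, hf0⟩ := main (n/2-e) (by omega) (by omega)
    refine ⟨_, hf.inv, ?_⟩
    rw [if_pos (by omega)]; omega

theorem EE (n e : ℕ) (he : e ≤ n) : ∃ f, Gr n f ∧ f 0 = e := by
  have main : ∀ e, e ≤ n/2 → ∃ f, Gr n f ∧ f 0 = e := by
    intro e he
    by_cases h : n = 4*e ∧ 0 < e
    · obtain ⟨A, hA, hA0, hA1⟩ := z_even e
      obtain ⟨B, hB, hB0⟩ := AE (2*e-1) (e-1) (by omega) (by omega)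
      have := cmpo_gr hA hB.1 (by omega)
      have e1 : 2*e + (2*e-1) + 1 = n := by omega
      rw [e1] at this
      exact ⟨_, this, by rw [cmpo_lo (by omega) (by omega), hA0]⟩
    · obtain ⟨f, hf, h0⟩ := AE n e he h
      exact ⟨f, hf.1, h0⟩
  by_cases h : e ≤ n/2
  · exact main e h
  · obtain ⟨f, hf, h0⟩ := main (n-e) (by omega)
    exact ⟨_, hf.com, by omega⟩


/-- some graceful sequence has value `i` at position `u` -/
def PP (n u i : ℕ) : Prop := ∃ f, Gr n f ∧ f u = i

theorem PP.rev {n u i} (h : PP n u i) (hu : u ≤ n) : PP n (n-u) i := by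
  obtain ⟨f, hf, e⟩ := h
  exact ⟨_, hf.rev, by rw [show n - (n - u) = u by omega, e]⟩

theorem PP.com {n u i} (h : PP n u i) : PP n u (n-i) := by
  obtain ⟨f, hf, e⟩ := h
  exact ⟨_, hf.com, by rw [e]⟩

theorem PP.rev' {n u v i} (h : PP n v i) (hu : u + v = n) : PP n u i := by
  have := h.rev (by omega)
  rwa [show n - v = u by omega] at this

theorem PP.com' {n u j i} (h : PP n u j) (hi : i + j = n) : PP n u i := by
  have := h.com
  rwa [show n - j = i by omega] at this

theorem L12 (n a x : ℕ) (hx : x ≤ a/2) (ha : a < n) (h1 : a/2+1-x ≤ n-a) (h2 : ¬ (a = 4*x ∧ 0 < x)) :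
    PP n a x ∧ PP n (a+1) (a-x) := by
  obtain ⟨A, hA, hA0⟩ := AE a x hx h2
  obtain ⟨B, hB, hB0⟩ := EE (n-a-1) (n-a-1+1-(a/2+1-x)) (by omega)
  have hr := hA.rev
  have h3 : A (a - a) = x := by rw [Nat.sub_self, hA0]
  have := cmpo_gr hr hB (by omega)
  rw [show a + (n-a-1) + 1 = n by omega] at this
  refine ⟨⟨_, this, ?_⟩, ⟨_, this.com, ?_⟩⟩
  · rw [cmpo_lo le_rfl (by omega)]; omega
  · have := cmpo_in (a := a) (m := n-a-1) (c := a/2+1) (A := fun j => A (a-j)) (B := B) 0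
    rw [add_zero] at this
    simp only [this]
    omega

theorem L3 (n r i : ℕ) (hr : r % 2 = 0) (h : 3*(i+r/2)+1 ≤ n) : PP n r i := by
  have hA := (zz_al (2*(i+r/2))).rev
  obtain ⟨B, hB, hB0⟩ := EE (n-2*(i+r/2)-1) (n-2*(i+r/2)-1-(i+r/2)) (by omega)
  have h3 : zz (2*(i+r/2)) (2*(i+r/2)-2*(i+r/2)) = 0 := by simp [zz]
  have h4 : zz (2*(i+r/2)) (2*(i+r/2)-r) = i := by
    unfold zz; rw [if_pos (by omega)]; omega
  have := cmpo_gr hA hB (by omega)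
  rw [show 2*(i+r/2) + (n-2*(i+r/2)-1) + 1 = n by omega] at this
  refine ⟨_, this, ?_⟩
  rw [cmpo_lo (by omega) (by omega)]; omega

/-- odd outer block joined to a bipartite inner sequence -/
theorem OJ (c l d : ℕ) (B : ℕ → ℕ) (hc : 1 ≤ c) (hB : Al l d B)
    (h : (B 0 < d ∧ B 0 ≤ c-1) ∨ (d ≤ B 0 ∧ l - B 0 ≤ c-1)) :
    ∃ f, Al (2*c+l) (c+d) f ∧ ∀ j, f (2*c+j) = c + B j := by
  have hb := hB.1.1 0 (by omega)
  have key : ∃ A, Al (2*c-1) c A ∧ ((A (2*c-1) < c ∧ c + B 0 = A (2*c-1) + l + 1 ∧ d ≤ B 0) ∨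
      (c ≤ A (2*c-1) ∧ A (2*c-1) = c + B 0 ∧ B 0 < d)) := by
    rcases h with h | h
    · obtain ⟨A, hA, hA0⟩ := AE (2*c-1) (c-1-B 0) (by omega) (by omega)
      have := hA.rev.com
      rw [show 2*c-1+1-((2*c-1)/2+1) = c by omega] at this
      refine ⟨_, this, Or.inr ?_⟩
      simp only [Nat.sub_self, hA0]
      omega
    · obtain ⟨A, hA, hA0⟩ := AE (2*c-1) (c-1-(l-B 0)) (by omega) (by omega)
      have := hA.rev
      rw [show (2*c-1)/2+1 = c by omega] at this
      refine ⟨_, this, Or.inl ?_⟩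
      simp only [Nat.sub_self, hA0]
      omega
  obtain ⟨A, hA, hj⟩ := key
  have := cmpo_al hA hB hj
  rw [show 2*c-1+l+1 = 2*c+l by omega] at this
  refine ⟨_, this, fun j => ?_⟩
  rw [← cmpo_in (a := 2*c-1) (m := l) (A := A) (B := B) j]
  congr 1; omega

theorem ZI (l r : ℕ) (h : r ≤ l) : ∃ B d, Al l d B ∧ B (l-r) = r/2 ∧
    ((B 0 < d ∧ B 0 ≤ l/2) ∨ (d ≤ B 0 ∧ l - B 0 ≤ l/2)) ∧ (r = l → d = r/2+1) := by
  rcases Nat.mod_two_eq_zero_or_one r with hr | hr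
  · refine ⟨_, _, (zz_al l).rev, ?_, ?_, by omega⟩
    · rw [show l - (l-r) = r by omega]; simp [zz, hr]
    · simp only [zz]; split_ifs <;> omega
  · refine ⟨_, _, (zz_al l).rev.com, ?_, ?_, by omega⟩
    · rw [show l - (l-r) = r by omega]; simp [zz, hr]; omega
    · simp only [zz]; split_ifs <;> omega

theorem L4 (n r i : ℕ) (h1 : r/2 + 1 ≤ i) (h2 : r + 2*(i-r/2) ≤ n) (h3 : (n-2*(i-r/2))/2 ≤ i-r/2-1) :
    PP n r i := by
  obtain ⟨B, d, hB, hBr, hB0, -⟩ := ZI (n-2*(i-r/2)) r (by omega)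
  obtain ⟨f, hf, hj⟩ := OJ (i-r/2) _ d B (by omega) hB (by omega)
  rw [show 2*(i-r/2) + (n-2*(i-r/2)) = n by omega] at hf
  have := hj (n-2*(i-r/2)-r)
  refine PP.rev' (v := n - r) ⟨f, hf.1, ?_⟩ (by omega)
  rw [show n - r = 2*(i-r/2) + (n-2*(i-r/2)-r) by omega, this, hBr]; omega

theorem L5 (n r i : ℕ) (h1 : 2*(r/2) + 1 ≤ i) (h3 : 3*i+1+r%2 ≤ n) :
    PP n r i := by
  obtain ⟨B, d, hB, hBr, hB0, hd⟩ := ZI r r le_rfl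
  obtain ⟨f, hf, hj⟩ := OJ (i-r/2) _ d B (by omega) hB (by omega)
  have hd := hd rfl
  rw [show i-r/2+d = i+1 by omega] at hf
  have hj := hj 0
  have hg := hf.rev
  have hy := hf.1.1 0 (by omega)
  have hi : f (2*(i-r/2)+r-r) = i := by
    rw [show 2*(i-r/2)+r-r = 2*(i-r/2)+0 by omega, hj]
    rw [Nat.sub_self] at hBr; omega
  by_cases hlt : f 0 < i + 1
  · obtain ⟨C, hC, hC0⟩ := EE (n-(2*(i-r/2)+r)-1) (n-(2*(i-r/2)+r)-1+1-(i+1-f 0)) (by omega)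
    have := cmpo_gr hg hC (by simp only [Nat.sub_self]; omega)
    rw [show 2*(i-r/2)+r + (n-(2*(i-r/2)+r)-1) + 1 = n by omega] at this
    refine ⟨_, this, ?_⟩
    rw [cmpo_lo (by omega) (by omega)]; omega
  · obtain ⟨C, hC, hC0⟩ := EE (n-(2*(i-r/2)+r)-1) (f 0 - (i+1)) (by omega)
    have := cmpo_gr hg hC (by simp only [Nat.sub_self]; omega)
    rw [show 2*(i-r/2)+r + (n-(2*(i-r/2)+r)-1) + 1 = n by omega] at this
    refine ⟨_, this, ?_⟩
    rw [cmpo_lo (by omega) (by omega)]; omega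

theorem TT (c M : ℕ) (g : ℕ → ℕ) (hc : 1 ≤ c) (hg : Gr M g) (hs : M + 1 ≤ g 0 + c) :
    ∃ f, Gr (2*c+M) f ∧ ∀ j, f (2*c+j) = c + g j := by
  have hb := hg.1 0 (by omega)
  obtain ⟨A, hA, hA0⟩ := AE (2*c-1) (g 0 + c - M - 1) (by omega) (by omega)
  have := hA.rev
  rw [show (2*c-1)/2+1 = c by omega] at this
  have := cmpo_gr this hg (by simp only [Nat.sub_self]; omega)
  rw [show 2*c-1+M+1 = 2*c+M by omega] at this
  refine ⟨_, this, fun j => ?_⟩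
  rw [← cmpo_in (a := 2*c-1) (m := M) (A := fun j => A (2*c-1-j)) (B := g) j]
  congr 1; omega

theorem TE (c M : ℕ) (g : ℕ → ℕ) (hg : Gr M g) (hs : g 0 + c = M) :
    ∃ f, Gr (2*c+1+M) f ∧ ∀ j, f (2*c+1+j) = c + 1 + g j := by
  obtain ⟨A, hA, hA0, hA1⟩ := z_even c
  have := cmpo_gr hA hg (by omega)
  rw [show 2*c+M+1 = 2*c+1+M by omega] at this
  exact ⟨_, this, fun j => cmpo_in j⟩

theorem PO (M k : ℕ) (hk : 1 ≤ k) (h : 3*k+2 ≤ M ∨ (2*k+1 ≤ M ∧ (M-2*k)/2 ≤ k-1)) :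
    ∃ g, Gr M g ∧ g 0 = M - k ∧ g 1 = k := by
  rcases h with h | h
  · have hA := (zz_al (2*k+1)).rev
    obtain ⟨B, hB, hB0⟩ := EE (M-2*k-2) (M-2*k-2-k) (by omega)
    have h0 : zz (2*k+1) (2*k+1-0) = k+1 := by
      unfold zz; rw [if_neg (by omega)]; omega
    have h1 : zz (2*k+1) (2*k+1-1) = k := by
      unfold zz; rw [if_pos (by omega)]; omega
    have h2 : zz (2*k+1) (2*k+1-(2*k+1)) = 0 := by simp [zz]
    have := cmpo_gr hA hB (by omega)
    rw [show 2*k+1+(M-2*k-2)+1 = M by omega] at this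
    refine ⟨_, this, ?_, ?_⟩
    · rw [cmpo_hi (by omega) (by omega)]; omega
    · rw [cmpo_lo (by omega) (by omega)]; omega
  · have hB := (zz_al (M-2*k)).rev.com
    obtain ⟨f, hf, hj⟩ := OJ k _ _ _ hk hB (by simp only [zz]; split_ifs <;> omega)
    rw [show 2*k+(M-2*k) = M by omega] at hf
    refine ⟨_, hf.1.rev, ?_, ?_⟩
    · have := hj (M-2*k)
      rw [show 2*k+(M-2*k) = M by omega] at this
      simp only [Nat.sub_zero, this, Nat.sub_self]
      simp [zz]; omega
    · have := hj (M-2*k-1)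
      rw [show 2*k+(M-2*k-1) = M-1 by omega, show M-2*k-(M-2*k-1) = 1 by omega] at this
      simp only [this]
      simp [zz]

theorem L6 (n k : ℕ) (hk : 1 ≤ k) (h : 7*k+2 ≤ n ∨ (6*k+1 ≤ n ∧ (n-6*k)/2 ≤ k-1)) :
    PP n (4*k+1) (3*k) := by
  obtain ⟨g, hg, h0, h1⟩ := PO (n-4*k) k hk (by omega)
  obtain ⟨f, hf, hj⟩ := TT (2*k) (n-4*k) g (by omega) hg (by omega)
  rw [show 2*(2*k)+(n-4*k) = n by omega] at hf
  have := hj 1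
  refine ⟨f, hf, ?_⟩
  rw [show 4*k+1 = 2*(2*k)+1 by omega, this, h1]; omega


theorem Gr_of (n : ℕ) (f : ℕ → ℕ) (h : (∀ j < n+1, f j ≤ n) ∧ (∀ j < n+1, ∀ k < n+1, f j = f k → j = k) ∧
    (∀ j < n, ∀ k < n, ad (f j) (f (j+1)) = ad (f k) (f (k+1)) → j = k)) : Gr n f :=
  ⟨fun j hj => h.1 j (by omega), fun j k hj hk => h.2.1 j (by omega) k (by omega),
    fun j k hj hk => h.2.2 j hj k hk⟩

theorem Al_of (n c : ℕ) (f : ℕ → ℕ) (h : Gr n f) (h1 : c ≤ n+1) (h2 : ∀ j < n, (f j < c ↔ ¬ f (j+1) < c)) :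
    Al n c f := ⟨h, h1, fun j hj => h2 j hj⟩

/-- a list as a sequence -/
def ls (l : List ℕ) (j : ℕ) : ℕ := l.getD j 0

set_option maxRecDepth 100000
set_option maxHeartbeats 1000000

theorem X8a : PP 8 3 3 := ⟨ls [5,1,6,3,4,2,8,0,7], Gr_of _ _ (by decide), by decide⟩
theorem X8b : PP 8 4 1 := ⟨ls [3,4,2,6,1,7,0,8,5], Gr_of _ _ (by decide), by decide⟩
theorem X10 : PP 10 5 5 := ⟨ls [1,10,0,8,4,5,7,2,9,3,6], Gr_of _ _ (by decide), by decide⟩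
theorem X12a : PP 12 6 6 := ⟨ls [1,11,0,12,3,8,6,5,9,2,10,4,7], Gr_of _ _ (by decide), by decide⟩
theorem X12b : PP 12 3 6 := ⟨ls [7,4,8,6,5,0,12,1,11,2,10,3,9], Gr_of _ _ (by decide), by decide⟩
theorem X18 : PP 18 5 9 := ⟨ls [6,11,5,12,8,9,7,10,18,0,17,1,16,2,15,3,14,4,13],
  Gr_of _ _ (by decide), by decide⟩

theorem blk4 : Al 3 2 (ls [1,2,0,3]) :=
  Al_of _ _ _ (Gr_of _ _ (by decide)) (by decide) (by decide)
theorem blk6 : Al 5 3 (ls [2,3,1,4,0,5]) :=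
  Al_of _ _ _ (Gr_of _ _ (by decide)) (by decide) (by decide)
theorem blk3 : Al 2 1 (ls [1,0,2]) :=
  Al_of _ _ _ (Gr_of _ _ (by decide)) (by decide) (by decide)

theorem CO (v : ℕ) (hv : 4 ≤ v) : ∃ w, Gr (2*v) w ∧ w 0 = 2 ∧ w (2*v-1) = v ∧ w (2*v) = v+2 := by
  induction v using Nat.strong_induction_on with
  | _ v ih =>
  by_cases h7 : 7 ≤ v
  · obtain ⟨w, hw, h0, h1, h2⟩ := ih (v-3) (by omega) (by omega)
    have e0 : ls [2,3,1,4,0,5] 0 = 2 := rfl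
    have e5 : ls [2,3,1,4,0,5] 5 = 5 := rfl
    have := cmpo_gr blk6 hw (by omega)
    rw [show 5 + 2*(v-3) + 1 = 2*v by omega] at this
    refine ⟨_, this, ?_, ?_, ?_⟩
    · rw [cmpo_lo (by omega) (by omega), e0]
    · rw [show 2*v-1 = 5+1+(2*(v-3)-1) by omega, cmpo_in, h1]; omega
    · rw [show 2*v = 5+1+(2*(v-3)) by omega, cmpo_in, h2]; omega
  · have : v = 4 ∨ v = 5 ∨ v = 6 := by omega
    rcases this with rfl | rfl | rfl
    · exact ⟨ls [2,5,0,8,1,7,3,4,6], Gr_of _ _ (by decide), by decide, by decide, by decide⟩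
    · exact ⟨ls [2,6,3,8,1,9,0,10,4,5,7], Gr_of _ _ (by decide), by decide, by decide, by decide⟩
    · exact ⟨ls [2,7,4,10,3,11,1,12,0,9,5,6,8], Gr_of _ _ (by decide), by decide, by decide, by decide⟩

theorem CE (g : ℕ) (hg : g = 2 ∨ 4 ≤ g) :
    ∃ w, Gr (2*g+1) w ∧ w 0 = 1 ∧ w (2*g) = g ∧ w (2*g+1) = g+2 := by
  induction g using Nat.strong_induction_on with
  | _ v ih =>
  by_cases h7 : v = 2 ∨ v = 5
  · rcases h7 with rfl | rfl
    · exact ⟨ls [1,5,0,3,2,4], Gr_of _ _ (by decide), by decide, by decide, by decide⟩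
    · exact ⟨ls [1,9,2,11,0,10,4,8,3,6,5,7], Gr_of _ _ (by decide), by decide, by decide, by decide⟩
  · obtain ⟨w, hw, h0, h1, h2⟩ := ih (v-2) (by omega) (by omega)
    have e0 : ls [1,2,0,3] 0 = 1 := rfl
    have e5 : ls [1,2,0,3] 3 = 3 := rfl
    have := cmpo_gr blk4 hw (by omega)
    rw [show 3 + (2*(v-2)+1) + 1 = 2*v+1 by omega] at this
    refine ⟨_, this, ?_, ?_, ?_⟩
    · rw [cmpo_lo (by omega) (by omega), e0]
    · rw [show 2*v = 3+1+(2*(v-2)) by omega, cmpo_in, h1]; omega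
    · rw [show 2*v+1 = 3+1+(2*(v-2)+1) by omega, cmpo_in, h2]; omega

theorem center (h : ℕ) (hh : 4 ≤ h) : PP (2*h) h h := by
  by_cases h5 : h = 5
  · subst h5; exact X10
  by_cases h6 : h = 6
  · subst h6; exact X12a
  rcases Nat.mod_two_eq_zero_or_one h with hp | hp
  · obtain ⟨g, rfl⟩ : ∃ g, h = 2*g := ⟨h/2, by omega⟩
    obtain ⟨w, hw, h0, h1, h2⟩ := CE g (by omega)
    obtain ⟨f, hf, hj⟩ := TE (g-1) _ _ hw.rev (by simp only [Nat.sub_zero]; omega)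
    rw [show 2*(g-1)+1+(2*g+1) = 2*(2*g) by omega] at hf
    refine ⟨f, hf, ?_⟩
    have := hj 1
    rw [show 2*(g-1)+1+1 = 2*g by omega, show 2*g+1-1=2*g by omega, h1] at this
    omega
  · obtain ⟨v, rfl⟩ : ∃ v, h = 2*v-1 := ⟨(h+1)/2, by omega⟩
    obtain ⟨w, hw, h0, h1, h2⟩ := CO v (by omega)
    obtain ⟨f, hf, hj⟩ := TT (v-1) _ _ (by omega) hw.rev (by simp only [Nat.sub_zero]; omega)
    rw [show 2*(v-1)+2*v = 2*(2*v-1) by omega] at hf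
    refine ⟨f, hf, ?_⟩
    have := hj 1
    rw [show 2*(v-1)+1 = 2*v-1 by omega, h1] at this
    omega

theorem F3 (k : ℕ) (hk : 2 ≤ k) : PP (6*k) (2*k-1) (3*k) := by
  by_cases h2 : k = 2
  · subst h2; exact X12b
  by_cases h3 : k = 3
  · subst h3; exact X18
  have hp : PP (2*k) 1 k := by
    have := (L12 (2*k) (2*k-2) (k-2) (by omega) (by omega) (by omega) (by omega)).2
    rw [show 2*k-2-(k-2) = k by omega] at this
    exact this.rev' (by omega)
  have hp' : ∃ g, Gr (2*k) g ∧ g 1 = k ∧ 1 ≤ g 0 := by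
    obtain ⟨g, hg, h1⟩ := hp
    by_cases h0 : g 0 = 0
    · exact ⟨_, hg.com, by rw [h1]; omega, by rw [h0]; omega⟩
    · exact ⟨g, hg, h1, by omega⟩
  obtain ⟨g, hg, h1, h0⟩ := hp'
  obtain ⟨f, hf, hj⟩ := TT (2*k) _ g (by omega) hg (by omega)
  have := hj 1
  rw [show 2*(2*k)+2*k = 6*k by omega] at hf
  refine PP.rev' (v := 2*(2*k)+1) ⟨f, hf, ?_⟩ (by omega)
  omega

theorem WW (k : ℕ) (hk : k = 2 ∨ 4 ≤ k) : ∃ w, Al (2*k-2) k w ∧ w 0 = 1 ∧ w (2*k-2) ≤ k-2 := by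
  induction k using Nat.strong_induction_on with
  | _ v ih =>
  by_cases h7 : v = 2 ∨ v = 5
  · rcases h7 with rfl | rfl
    · exact ⟨ls [1,2,0], Al_of _ _ _ (Gr_of _ _ (by decide)) (by decide) (by decide),
        by decide, by decide⟩
    · exact ⟨ls [1,6,2,8,0,7,4,5,3], Al_of _ _ _ (Gr_of _ _ (by decide)) (by decide) (by decide),
        by decide, by decide⟩
  · obtain ⟨w, hw, h0, h1⟩ := ih (v-2) (by omega) (by omega)
    have e0 : ls [1,2,0,3] 0 = 1 := rfl
    have e5 : ls [1,2,0,3] 3 = 3 := rfl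
    have := cmpo_al blk4 hw (by omega)
    rw [show 3 + (2*(v-2)-2) + 1 = 2*v-2 by omega, show 2+(v-2) = v by omega] at this
    refine ⟨_, this, ?_, ?_⟩
    · rw [cmpo_lo (by omega) (by omega), e0]
    · rw [show 2*v-2 = 3+1+(2*(v-2)-2) by omega, cmpo_in]; omega

theorem F1 (k : ℕ) (hk : 1 ≤ k) : PP (8*k) (4*k) k := by
  by_cases h1 : k = 1
  · subst h1; exact X8b
  have key : ∃ A, Al (4*k+1) (2*k+1) A ∧ A 0 = 3*k+2 - (if k = 3 then 2 else 0) ∧ A 1 = k := by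
    by_cases h3 : k = 3
    · subst h3
      exact ⟨ls [9,3,7,6,8,5,10,0,13,1,12,4,11,2],
        Al_of _ _ _ (Gr_of _ _ (by decide)) (by decide) (by decide), by decide, by decide⟩
    rw [if_neg h3]
    obtain ⟨w, hw, h0, hy⟩ := WW k (by omega)
    have e0 : ls [1,0,2] 0 = 1 := rfl
    have e1 : ls [1,0,2] 1 = 0 := rfl
    have e2 : ls [1,0,2] 2 = 2 := rfl
    have hA := cmpo_al blk3 hw (by omega)
    rw [show 2+(2*k-2)+1 = 2*k+1 by omega, show 1+k = k+1 by omega] at hA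
    have a0 : cmpo 2 (2*k-2) 1 (ls [1,0,2]) w 0 = 2*k := by
      rw [cmpo_hi (by omega) (by omega), e0]; omega
    have a1 : cmpo 2 (2*k-2) 1 (ls [1,0,2]) w 1 = 0 := by
      rw [cmpo_lo (by omega) (by omega), e1]
    have a2 : cmpo 2 (2*k-2) 1 (ls [1,0,2]) w (2*k+1) = 1 + w (2*k-2) := by
      rw [show 2*k+1 = 2+1+(2*k-2) by omega, cmpo_in]
    generalize cmpo 2 (2*k-2) 1 (ls [1,0,2]) w = A at hA a0 a1 a2
    have hI : ∃ I, Al (2*k+1) (k+1) I ∧ I 0 = k+2 ∧ I 1 = k ∧ 1 ≤ I (2*k+1) ∧ I (2*k+1) ≤ k := by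
      refine ⟨_, hA.inv, ?_, ?_, ?_⟩
      · rw [if_neg (by omega)]; omega
      · rw [if_pos (by omega)]; omega
      · rw [if_pos (by omega)]; omega
    obtain ⟨I, hI, i0, i1, i2, i3⟩ := hI
    obtain ⟨V, hV, v0⟩ := AE (2*k-1) (k - I (2*k+1)) (by omega) (by omega)
    have hV := hV.com
    rw [show 2*k-1+1-((2*k-1)/2+1) = k by omega] at hV
    have := cmpo_al hI hV (by omega)
    rw [show 2*k+1+(2*k-1)+1 = 4*k+1 by omega, show k+1+k = 2*k+1 by omega] at this
    refine ⟨_, this, ?_, ?_⟩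
    · rw [cmpo_hi (by omega) (by omega), i0]; omega
    · rw [cmpo_lo (by omega) (by omega), i1]
  obtain ⟨A, hA, a0, a1⟩ := key
  have hr := hA.rev
  obtain ⟨B, hB, b0⟩ := EE (4*k-2) (A 0 - (2*k+1)) (by split_ifs at a0 <;> omega)
  have := cmpo_gr hr hB (by simp only [Nat.sub_self]; split_ifs at a0 <;> omega)
  rw [show 4*k+1+(4*k-2)+1 = 8*k by omega] at this
  have e1 : 4*k+1-4*k = 1 := by omega
  refine ⟨_, this, ?_⟩
  rw [cmpo_lo (by omega) (by rw [e1]; omega), e1, a1]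

theorem core (n r i : ℕ) (hn : 8 ≤ n) (hr : r ≤ n/2) (hi : i ≤ n/2) : PP n r i := by
  rcases Nat.eq_zero_or_pos r with h0 | h0
  · subst h0; exact EE n i (by omega)
  by_cases hir : i < r
  · by_cases h1 : i ≤ r/2
    · by_cases he : r = 4*i ∧ 0 < i
      · obtain ⟨rfl, hi0⟩ := he
        by_cases h9 : 9*i+1 ≤ n
        · exact L3 _ _ _ (by omega) (by omega)
        by_cases h8 : n = 8*i
        · subst h8; exact F1 i hi0
        · exact (L12 n (n-4*i) i (by omega) (by omega) (by omega) (by omega)).1.rev' (by omega)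
      · exact (L12 n r i h1 (by omega) (by omega) he).1
    · by_cases he : r - 1 = 4*(r-1-i) ∧ 0 < r-1-i
      · obtain ⟨x, hx⟩ : ∃ x, x = r-1-i := ⟨_, rfl⟩
        have := L6 n x (by omega) (by omega)
        rwa [show 4*x+1 = r by omega, show 3*x = i by omega] at this
      · have := (L12 n (r-1) (r-1-i) (by omega) (by omega) (by omega) he).2
        rwa [show r-1+1 = r by omega, show r-1-(r-1-i) = i by omega] at this
  by_cases hh : n < 2*i+3*r
  · by_cases h1 : i ≤ (n-r)/2
    · exact (L12 n (n-r) i h1 (by omega) (by omega) (by omega)).1.rev' (by omega)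
    by_cases hc : n ≤ i + r
    · have := center r (by omega)
      rwa [show 2*r = n by omega, show PP n r r = PP n r i by congr 1; omega] at this
    by_cases he : n-r-1 = 4*(n-r-1-i) ∧ 0 < n-r-1-i
    · obtain ⟨x, hx⟩ : ∃ x, x = n-r-1-i := ⟨_, rfl⟩
      by_cases h6 : n = 6*x
      · have := F3 x (by omega)
        rwa [← h6, show 2*x-1 = r by omega, show 3*x = i by omega] at this
      by_cases h8 : x = 1
      · by_cases h88 : n = 8
        · have := X8a
          rwa [show PP 8 3 3 = PP n r i by congr 1 <;> omega] at this
        · have := L6 n x (by omega) (by omega)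
          exact PP.rev' (v := 4*x+1) (by rwa [show 3*x = i by omega] at this) (by omega)
      · have := L6 n x (by omega) (by omega)
        exact PP.rev' (v := 4*x+1) (by rwa [show 3*x = i by omega] at this) (by omega)
    · have := (L12 n (n-r-1) (n-r-1-i) (by omega) (by omega) (by omega) he).2
      rw [show n-r-1+1 = n-r by omega, show n-r-1-(n-r-1-i) = i by omega] at this
      exact this.rev' (by omega)
  · by_cases h3 : r % 2 = 0 ∧ 3*(i+r/2)+1 ≤ n
    · exact L3 _ _ _ h3.1 h3.2
    by_cases h5 : 3*i+1+r%2 ≤ n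
    · exact L5 _ _ _ (by omega) h5
    · exact L4 _ _ _ (by omega) (by omega) (by omega)

theorem all (n u i : ℕ) (hn : 8 ≤ n) (hu : u ≤ n) (hi : i ≤ n) : PP n u i := by
  have h1 : ∀ u i, u ≤ n → i ≤ n/2 → PP n u i := by
    intro u i hu hi
    by_cases h : u ≤ n/2
    · exact core n u i hn h hi
    · exact (core n (n-u) i hn (by omega) hi).rev' (by omega)
  by_cases h : i ≤ n/2
  · exact h1 u i hu h
  · exact (h1 u (n-i) hu (by omega)).com' (by omega)

theorem bridge (n : ℕ) (f : ℕ → ℕ) (hf : Gr n f) :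
    IsGracefulLabeling (SimpleGraph.pathGraph (n + 1)) (fun v : Fin (n+1) => f v) := by
  let g : Fin n → Sym2 (Fin (n+1)) := fun j => s(j.castSucc, j.succ)
  have hE : (SimpleGraph.pathGraph (n+1)).edgeSet = Set.range g := by
    ext e
    induction e using Sym2.ind with
    | _ a b =>
    rw [SimpleGraph.mem_edgeSet, SimpleGraph.pathGraph_adj]
    simp only [Set.mem_range, g, Sym2.eq_iff, Fin.ext_iff, Fin.val_castSucc, Fin.val_succ]
    constructor
    · rintro (h | h)
      · exact ⟨⟨a, by omega⟩, Or.inl ⟨rfl, h⟩⟩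
      · exact ⟨⟨b, by omega⟩, Or.inr ⟨rfl, h⟩⟩
    · rintro ⟨j, h | h⟩ <;> omega
  have hl : ∀ j, edgeLabel (fun v : Fin (n+1) => f v) (g j) = ad (f j) (f (j+1)) := by
    intro j
    simp [edgeLabel, g, Nat.dist, ad]
  have hinj : Function.Injective (fun j : Fin n => ad (f j) (f (j+1))) := by
    intro j k h
    exact Fin.ext (hf.2.2 j k j.2 k.2 h)
  have hg : Function.Injective g := by
    intro j k h
    apply hinj
    simp only [← hl, h]
  have hcard : Nat.card (SimpleGraph.pathGraph (n+1)).edgeSet = n := by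
    rw [hE, Nat.card_range_of_injective hg, Nat.card_fin]
  refine ⟨?_, ?_, ?_, ?_⟩
  · intro a b h
    exact Fin.ext (hf.2.1 a b (by omega) (by omega) h)
  · intro v; rw [hcard]; exact hf.1 v (by omega)
  · rw [hE]
    rintro _ ⟨j, rfl⟩ _ ⟨k, rfl⟩ h
    rw [hl, hl] at h
    rw [hinj h]
  · rw [hcard, hE, ← Set.range_comp]
    have : (edgeLabel (fun v : Fin (n+1) => f v)) ∘ g = fun j : Fin n => ad (f j) (f (j+1)) := by
      funext j; exact hl j
    rw [this]
    apply Set.eq_of_subset_of_ncard_le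
    · rintro _ ⟨j, rfl⟩
      have h1 := hf.1 j (by omega)
      have h2 := hf.1 (j+1) (by omega)
      have h3 : f j ≠ f (j+1) := by
        intro h
        have := hf.2.1 j (j+1) (by omega) (by omega) h
        omega
      simp only [Set.mem_Icc, ad]
      omega
    · rw [← Nat.card_coe_set_eq (Set.range _), Nat.card_range_of_injective hinj, Nat.card_fin]
      rw [← Finset.coe_Icc, Set.ncard_coe_finset, Nat.card_Icc]
      omega
    · exact Set.finite_Icc 1 n

/-- For the path `P` with `n ≥ 8` edges (`n + 1` vertices), every vertex
`u` and every `i` with `0 ≤ i ≤ n` admit a graceful labeling `α` of `P` with `α u = i`. -/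
theorem pathGraph_every_vertex_attractive (n : ℕ) (hn : 8 ≤ n)
    (u : Fin (n + 1)) (i : ℕ) (hi : i ≤ n) :
    ∃ α : Fin (n + 1) → ℕ,
      IsGracefulLabeling (SimpleGraph.pathGraph (n + 1)) α ∧ α u = i := by
  obtain ⟨f, hf, e⟩ := all n u i hn (by omega) hi
  exact ⟨_, bridge n f hf, e⟩
end

section
/- Every finite simple graph G can be embedded into a graceful graph; that is, for every finite simple graph G there exists a graceful graph H containing a subgraph isomorphic to G. -/
lemma gcd_pow_diff (i k n : ℕ) (hk : 0 < k) (hi : i ≤ n) :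
    Nat.gcd (2 ^ (i + k) - 2 ^ i) (2 ^ n) = 2 ^ i := by
  obtain ⟨m, rfl⟩ := Nat.exists_eq_add_of_le hi
  have h : 2 ^ (i + k) - 2 ^ i = 2 ^ i * (2 ^ k - 1) := by
    rw [pow_add, Nat.mul_sub, mul_one]
  rw [h, pow_add, Nat.gcd_mul_left]
  have hodd : Nat.Coprime (2 ^ k - 1) (2 ^ m) := by
    apply Nat.Coprime.pow_right
    rw [Nat.coprime_two_right]
    obtain ⟨l, rfl⟩ : ∃ l, k = l + 1 := ⟨k - 1, by omega⟩
    have : 0 < 2 ^ l := by positivity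
    rw [pow_succ]
    exact ⟨2 ^ l - 1, by omega⟩
  rw [hodd.gcd_eq_one, mul_one]

/-- Lower endpoint of the unique edge with difference `d`. -/
def lowEnd (q d : ℕ) : ℕ := if d + Nat.gcd d q ≤ q then Nat.gcd d q else 0

/-- The graph on `{0, ..., q}` with one edge of each difference. -/
def diffGraph (q : ℕ) : SimpleGraph (Fin (q + 1)) where
  Adj a b := a ≠ b ∧ min a.val b.val = lowEnd q (Nat.dist a.val b.val)
  symm := ⟨fun a b h => ⟨h.1.symm, by rw [min_comm, Nat.dist_comm]; exact h.2⟩⟩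
  loopless := ⟨fun a h => h.1 rfl⟩

lemma diffGraph_injOn (q : ℕ) :
    Set.InjOn (edgeLabel (Fin.val : Fin (q + 1) → ℕ)) (diffGraph q).edgeSet := by
  intro x hx y hy hxy
  induction x using Sym2.ind with | _ a b =>
  induction y using Sym2.ind with | _ c d =>
  rw [SimpleGraph.mem_edgeSet] at hx hy
  obtain ⟨h1, h2⟩ := hx
  obtain ⟨h3, h4⟩ := hy
  change Nat.dist a.val b.val = Nat.dist c.val d.val at hxy
  rw [hxy, ← h4] at h2
  rw [Sym2.eq_iff]
  simp only [Fin.ext_iff, Nat.dist] at *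
  omega

lemma diffGraph_image (q : ℕ) :
    edgeLabel (Fin.val : Fin (q + 1) → ℕ) '' (diffGraph q).edgeSet = Set.Icc 1 q := by
  ext d
  constructor
  · rintro ⟨x, hx, rfl⟩
    induction x using Sym2.ind with | _ a b =>
    rw [SimpleGraph.mem_edgeSet] at hx
    have h := hx.1
    change Nat.dist a.val b.val ∈ _
    have := a.isLt
    have := b.isLt
    simp only [Fin.ext_iff, Nat.dist, Set.mem_Icc, ne_eq] at *
    omega
  · rintro ⟨h1, h2⟩
    have h3 : lowEnd q d + d ≤ q := by
      unfold lowEnd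
      split_ifs <;> omega
    have hd : Nat.dist (lowEnd q d) (lowEnd q d + d) = d := by
      simp only [Nat.dist]; omega
    refine ⟨s(⟨lowEnd q d, by omega⟩, ⟨lowEnd q d + d, by omega⟩), ?_, hd⟩
    rw [SimpleGraph.mem_edgeSet]
    refine ⟨by simp only [ne_eq, Fin.ext_iff]; omega, ?_⟩
    simp only [hd]
    omega

lemma diffGraph_graceful (q : ℕ) : IsGraceful (diffGraph q) := by
  have hc : Nat.card (diffGraph q).edgeSet = q := by
    have h := Set.ncard_image_of_injOn (diffGraph_injOn q)
    rw [diffGraph_image, Set.ncard_eq_toFinset_card'] at h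
    rw [Nat.card_coe_set_eq, ← h]
    simp
  refine ⟨Fin.val, Fin.val_injective, ?_, diffGraph_injOn q, ?_⟩
  · intro v
    rw [hc]
    omega
  · rw [hc, diffGraph_image]

lemma low_pow (n i j : ℕ) (hij : i < j) (hj : j ≤ n) :
    lowEnd (2 ^ n) (2 ^ j - 2 ^ i) = 2 ^ i := by
  obtain ⟨k, rfl⟩ := Nat.exists_eq_add_of_lt hij
  have h := gcd_pow_diff i (k + 1) n (by omega) (by omega)
  have h1 : 2 ^ i ≤ 2 ^ (i + k + 1) := Nat.pow_le_pow_right (by norm_num) (by omega)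
  have h2 : 2 ^ (i + k + 1) ≤ 2 ^ n := Nat.pow_le_pow_right (by norm_num) hj
  rw [← add_assoc] at h
  unfold lowEnd
  rw [h, if_pos (by omega)]

lemma adj_pow (n i j : ℕ) (hij : i < j) (hj : j ≤ n) (h1 : 2 ^ i < 2 ^ n + 1)
    (h2 : 2 ^ j < 2 ^ n + 1) : (diffGraph (2 ^ n)).Adj ⟨2 ^ i, h1⟩ ⟨2 ^ j, h2⟩ := by
  have h : 2 ^ i < 2 ^ j := Nat.pow_lt_pow_right (by norm_num) hij
  refine ⟨by simp only [ne_eq, Fin.ext_iff]; omega, ?_⟩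
  have hd : Nat.dist (2 ^ i) (2 ^ j) = 2 ^ j - 2 ^ i := by
    simp only [Nat.dist]; omega
  simp only [hd, low_pow n i j hij hj]
  omega

/-- Every finite simple graph can be embedded into a graceful graph
as a subgraph (an injective graph homomorphism into a graceful graph). -/
theorem embed_into_graceful {V : Type*} [Fintype V] (G : SimpleGraph V) :
    ∃ (W : Type) (_ : Fintype W) (H : SimpleGraph W),
      IsGraceful H ∧ ∃ f : G →g H, Function.Injective f := by
  classical
  set n := Fintype.card V
  let e := Fintype.equivFin V
  have hlt : ∀ v, 2 ^ (e v).val < 2 ^ n + 1 := fun v =>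
    Nat.lt_succ_of_le (Nat.pow_le_pow_right (by norm_num) (e v).isLt.le)
  refine ⟨Fin (2 ^ n + 1), inferInstance, diffGraph (2 ^ n), diffGraph_graceful _,
    ⟨fun v => ⟨2 ^ (e v).val, hlt v⟩, ?_⟩, ?_⟩
  · intro a b hab
    have hne : (e a).val ≠ (e b).val := fun h => hab.ne (e.injective (Fin.ext h))
    rcases lt_or_gt_of_ne hne with h | h
    · exact adj_pow n _ _ h (e b).isLt.le _ _
    · exact (adj_pow n _ _ h (e a).isLt.le _ _).symm
  · intro a b hab
    have h : 2 ^ (e a).val = 2 ^ (e b).val := congrArg Fin.val hab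
    exact e.injective (Fin.ext (Nat.pow_right_injective (le_refl 2) h))
end

section
/- Every finite simple graph G can be embedded into a graceful graph as an induced subgraph; that is, for every finite simple graph G there exists a graceful graph H containing an induced subgraph isomorphic to G. -/
theorem pow_sidon_aux {i j k l : ℕ} (h1 : i < j) (h2 : k < l)
    (h : 2 ^ j + 2 ^ k = 2 ^ l + 2 ^ i) : j ≤ l := by
  by_contra hc
  have a1 : 2 ^ (i + 1) ≤ 2 ^ j := Nat.pow_le_pow_right (by norm_num) h1
  have a2 : 2 ^ (l + 1) ≤ 2 ^ j := Nat.pow_le_pow_right (by norm_num) (by omega)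
  have a3 : 0 < 2 ^ k := by positivity
  rw [pow_succ] at a1 a2
  omega

theorem pow_sidon_lt {i j k l : ℕ} (h1 : i < j) (h2 : k < l)
    (h : 2 ^ j + 2 ^ k = 2 ^ l + 2 ^ i) : i = k ∧ j = l := by
  have e : j = l := le_antisymm (pow_sidon_aux h1 h2 h) (pow_sidon_aux h2 h1 h.symm)
  subst e
  have : 2 ^ k = 2 ^ i := by omega
  exact ⟨(Nat.pow_right_injective le_rfl this).symm, rfl⟩

theorem pow_sidon {i j k l : ℕ} (h1 : i ≠ j) (h2 : k ≠ l)
    (h : Nat.dist (2 ^ i) (2 ^ j) = Nat.dist (2 ^ k) (2 ^ l)) :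
    (i = k ∧ j = l) ∨ (i = l ∧ j = k) := by
  have key : ∀ {a b : ℕ}, a < b → 2 ^ a < 2 ^ b := fun h => Nat.pow_lt_pow_right (by norm_num) h
  unfold Nat.dist at h
  rcases lt_or_gt_of_ne h1 with h1 | h1 <;> rcases lt_or_gt_of_ne h2 with h2 | h2 <;>
    have k1 := key h1 <;> have k2 := key h2
  · have := pow_sidon_lt h1 h2 (by omega)
    omega
  · have := pow_sidon_lt h1 h2 (by omega)
    omega
  · have := pow_sidon_lt h1 h2 (by omega)
    omega
  · have := pow_sidon_lt h1 h2 (by omega)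
    omega

/-- Edges of `G` placed at labels `f`, and edges from `0` for every unused label. -/
def gracefulHost {V : Type*} (G : SimpleGraph V) (f : V → ℕ) (N : ℕ) :
    SimpleGraph (Fin (N + 1)) where
  Adj a b := a ≠ b ∧ ((∃ u v, G.Adj u v ∧ a.val = f u ∧ b.val = f v) ∨
    ((a.val = 0 ∨ b.val = 0) ∧
      ¬ ∃ u v, G.Adj u v ∧ Nat.dist a.val b.val = Nat.dist (f u) (f v)))
  symm := by
    constructor
    rintro a b ⟨hne, h⟩
    refine ⟨hne.symm, ?_⟩
    rcases h with ⟨u, v, h, ha, hb⟩ | ⟨h0, h⟩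
    · exact Or.inl ⟨v, u, h.symm, hb, ha⟩
    · exact Or.inr ⟨h0.symm, by rwa [Nat.dist_comm]⟩
  loopless := ⟨fun a h => h.1 rfl⟩

theorem gracefulHost_injOn {V : Type*} (G : SimpleGraph V) (f : V → ℕ) (N : ℕ)
    (hs : ∀ u v u' v', G.Adj u v → G.Adj u' v' →
      Nat.dist (f u) (f v) = Nat.dist (f u') (f v') → (u = u' ∧ v = v') ∨ (u = v' ∧ v = u')) :
    Set.InjOn (edgeLabel (fun a : Fin (N + 1) => a.val)) (gracefulHost G f N).edgeSet := by
  intro x hx y hy hxy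
  induction x using Sym2.ind with | _ a b
  induction y using Sym2.ind with | _ c d
  rw [SimpleGraph.mem_edgeSet] at hx hy
  change Nat.dist a.val b.val = Nat.dist c.val d.val at hxy
  rw [Sym2.eq_iff]
  simp only [Fin.ext_iff]
  obtain ⟨hne, hx⟩ := hx
  obtain ⟨hne', hy⟩ := hy
  rcases hx with ⟨u, v, h, ha, hb⟩ | ⟨h0, h⟩ <;> rcases hy with ⟨u', v', h', hc, hd⟩ | ⟨h0', h'⟩
  · rw [ha, hb, hc, hd] at hxy ⊢
    rcases hs _ _ _ _ h h' hxy with ⟨rfl, rfl⟩ | ⟨rfl, rfl⟩ <;> simp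
  · exact absurd ⟨u, v, h, by rw [← hxy, ha, hb]⟩ h'
  · exact absurd ⟨u', v', h', by rw [hxy, hc, hd]⟩ h
  · unfold Nat.dist at hxy
    omega

theorem gracefulHost_image {V : Type*} (G : SimpleGraph V) (f : V → ℕ) (N : ℕ)
    (hN : ∀ v, f v ≤ N) (hf : Function.Injective f) :
    edgeLabel (fun a : Fin (N + 1) => a.val) '' (gracefulHost G f N).edgeSet = Set.Icc 1 N := by
  ext d
  constructor
  · rintro ⟨x, hx, rfl⟩
    induction x using Sym2.ind with | _ a b
    rw [SimpleGraph.mem_edgeSet] at hx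
    have h1 := hx.1
    change Nat.dist a.val b.val ∈ _
    rw [Ne, Fin.ext_iff] at h1
    simp only [Set.mem_Icc, Nat.dist]
    omega
  · rintro ⟨h1, h2⟩
    by_cases h : ∃ u v, G.Adj u v ∧ d = Nat.dist (f u) (f v)
    · obtain ⟨u, v, huv, rfl⟩ := h
      refine ⟨s(⟨f u, Nat.lt_succ_of_le (hN u)⟩, ⟨f v, Nat.lt_succ_of_le (hN v)⟩), ?_, rfl⟩
      rw [SimpleGraph.mem_edgeSet]
      refine ⟨?_, Or.inl ⟨u, v, huv, rfl, rfl⟩⟩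
      rw [Ne, Fin.ext_iff]
      exact fun e => huv.ne (hf e)
    · have e : Nat.dist 0 d = d := by simp [Nat.dist]
      refine ⟨s(⟨0, Nat.succ_pos N⟩, ⟨d, Nat.lt_succ_of_le h2⟩), ?_, e⟩
      rw [SimpleGraph.mem_edgeSet]
      refine ⟨?_, Or.inr ⟨Or.inl rfl, ?_⟩⟩
      · rw [Ne, Fin.ext_iff]
        exact fun e => by simp at e; omega
      · simpa only [e] using h

/-- Every finite simple graph can be embedded into a graceful graph
as an induced subgraph. -/
theorem embed_into_graceful_induced {V : Type*} [Fintype V] (G : SimpleGraph V) :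
    ∃ (W : Type) (_ : Fintype W) (H : SimpleGraph W),
      IsGraceful H ∧ Nonempty (G ↪g H) := by
  classical
  let e := Fintype.equivFin V
  let f : V → ℕ := fun v => 2 ^ (e v).val
  let N := 2 ^ Fintype.card V
  have einj : ∀ u v, (e u).val = (e v).val → u = v := fun u v h => e.injective (Fin.ext h)
  have hf : Function.Injective f := fun u v h => einj u v (Nat.pow_right_injective le_rfl h)
  have hpos : ∀ v, f v ≠ 0 := fun v => by positivity
  have hN : ∀ v, f v ≤ N := fun v => Nat.pow_le_pow_right (by norm_num) (e v).isLt.le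
  have hinj := gracefulHost_injOn G f N (by
    intro u v u' v' h h' hd
    rcases pow_sidon (fun q => h.ne (einj _ _ q)) (fun q => h'.ne (einj _ _ q)) hd with
      ⟨p, q⟩ | ⟨p, q⟩
    · exact Or.inl ⟨einj _ _ p, einj _ _ q⟩
    · exact Or.inr ⟨einj _ _ p, einj _ _ q⟩)
  have him := gracefulHost_image G f N hN hf
  have hcard : Nat.card (gracefulHost G f N).edgeSet = N := by
    rw [Nat.card_coe_set_eq, ← Set.InjOn.ncard_image hinj, him, ← Finset.coe_Icc,
      Set.ncard_coe_finset, Nat.card_Icc, Nat.add_sub_cancel]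
  refine ⟨Fin (N + 1), inferInstance, gracefulHost G f N,
    ⟨fun a => a.val, Fin.val_injective, ?_, hinj, ?_⟩, ⟨?_⟩⟩
  · intro v
    rw [hcard]
    exact Nat.le_of_lt_succ v.isLt
  · rw [hcard, him]
  · refine ⟨⟨fun v => ⟨f v, Nat.lt_succ_of_le (hN v)⟩, ?_⟩, ?_⟩
    · intro u v h
      exact hf (Fin.ext_iff.1 h)
    · intro u v
      constructor
      · rintro ⟨_, ⟨u', v', h, ha, hb⟩ | ⟨h0, _⟩⟩
        · have ha := hf ha
          have hb := hf hb
          subst ha hb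
          exact h
        · exact (h0.elim (hpos u) (hpos v)).elim
      · intro h
        refine ⟨?_, Or.inl ⟨u, v, h, rfl, rfl⟩⟩
        intro q
        exact h.ne (hf (Fin.ext_iff.1 q))
end

section
/- If G is a supergraceful graph, then the join K_1 + G (the graph obtained from G by adding one new vertex adjacent to every vertex of G) is graceful. -/
/-- `φ` is a total labeling of the graph `G` with `p` vertices and `q` edges:
it is injective, the induced edge labels are pairwise distinct, no value is both
a vertex label and an edge label, and the vertex labels together with the edge
labels form exactly the set `{1, 2, ..., p+q}`. -/
def IsTotalLabeling {V : Type*} (G : SimpleGraph V) (φ : V → ℕ) : Prop :=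
  Function.Injective φ ∧
  Set.InjOn (edgeLabel φ) G.edgeSet ∧
  Disjoint (Set.range φ) (edgeLabel φ '' G.edgeSet) ∧
  Set.range φ ∪ edgeLabel φ '' G.edgeSet = Set.Icc 1 (Nat.card V + Nat.card G.edgeSet)

/-- A graph is supergraceful if it admits a total labeling. -/
def IsSupergraceful {V : Type*} (G : SimpleGraph V) : Prop :=
  ∃ φ : V → ℕ, IsTotalLabeling G φ

/-- The join `K₁ + G`: a new vertex `none` adjacent to every vertex of `G`,
with `G` itself on the `some` vertices. -/
def addApex {V : Type*} (G : SimpleGraph V) : SimpleGraph (Option V) :=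
  SimpleGraph.fromRel (fun x y =>
    x = none ∨ ∃ u v, x = some u ∧ y = some v ∧ G.Adj u v)

theorem addApex_edgeSet {V : Type*} (G : SimpleGraph V) :
    (addApex G).edgeSet =
      Set.range (fun v => s(none, some v)) ∪ Sym2.map some '' G.edgeSet := by
  ext e
  induction e using Sym2.ind with
  | _ x y =>
    rw [SimpleGraph.mem_edgeSet]
    constructor
    · intro h
      rw [addApex, SimpleGraph.fromRel_adj] at h
      obtain ⟨hne, h | h⟩ := h
      · rcases h with rfl | ⟨u, v, rfl, rfl, huv⟩
        · cases y with
          | none => exact absurd rfl hne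
          | some v => exact Or.inl ⟨v, rfl⟩
        · exact Or.inr ⟨s(u, v), huv, rfl⟩
      · rcases h with rfl | ⟨u, v, rfl, rfl, huv⟩
        · cases x with
          | none => exact absurd rfl hne
          | some v => exact Or.inl ⟨v, Sym2.eq_swap⟩
        · exact Or.inr ⟨s(v, u), huv.symm, rfl⟩
    · rintro (⟨v, hv⟩ | ⟨e, he, hv⟩)
      · rw [← SimpleGraph.mem_edgeSet, ← hv, SimpleGraph.mem_edgeSet, addApex,
          SimpleGraph.fromRel_adj]
        exact ⟨by simp, Or.inl (Or.inl rfl)⟩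
      · rw [← SimpleGraph.mem_edgeSet, ← hv]
        induction e using Sym2.ind with
        | _ a b =>
          rw [SimpleGraph.mem_edgeSet] at he
          rw [Sym2.map_mk, SimpleGraph.mem_edgeSet, addApex, SimpleGraph.fromRel_adj]
          exact ⟨by simpa using he.ne, Or.inl (Or.inr ⟨a, b, rfl, rfl, he⟩)⟩

/-- The extended labeling: the apex gets `0`. -/
def apexLabel {V : Type*} (φ : V → ℕ) : Option V → ℕ := fun x => x.elim 0 φ

theorem edgeLabel_apex_none {V : Type*} (φ : V → ℕ) (v : V) :
    edgeLabel (apexLabel φ) s(none, some v) = φ v := by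
  simp [edgeLabel, apexLabel, Nat.dist]

theorem edgeLabel_apex_map {V : Type*} (φ : V → ℕ) (e : Sym2 V) :
    edgeLabel (apexLabel φ) (Sym2.map some e) = edgeLabel φ e := by
  induction e using Sym2.ind with
  | _ a b => rfl

/-- If `G` is supergraceful, then the join `K₁ + G` is graceful. -/
theorem join_one_graceful_of_supergraceful {V : Type*} [Fintype V]
    (G : SimpleGraph V) (h : IsSupergraceful G) :
    IsGraceful (addApex G) := by
  obtain ⟨φ, hinj, hE, hdis, hun⟩ := h
  have himg : edgeLabel (apexLabel φ) '' (addApex G).edgeSet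
      = Set.Icc 1 (Nat.card V + Nat.card G.edgeSet) := by
    rw [← hun, addApex_edgeSet, Set.image_union, ← Set.range_comp, Set.image_image]
    simp only [edgeLabel_apex_map]
    congr 1
    exact congrArg Set.range (funext fun v => edgeLabel_apex_none φ v)
  have hinjOn : Set.InjOn (edgeLabel (apexLabel φ)) (addApex G).edgeSet := by
    rw [addApex_edgeSet]
    rintro _ (⟨v, rfl⟩ | ⟨e, he, rfl⟩) _ (⟨w, rfl⟩ | ⟨f, hf, rfl⟩) heq <;>
      simp only [edgeLabel_apex_map, edgeLabel_apex_none] at heq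
    · rw [hinj heq]
    · exact (Set.disjoint_left.mp hdis ⟨v, rfl⟩ ⟨f, hf, heq.symm⟩).elim
    · exact (Set.disjoint_left.mp hdis ⟨w, rfl⟩ ⟨e, he, heq⟩).elim
    · rw [hE he hf heq]
  have hcard : Nat.card (addApex G).edgeSet = Nat.card V + Nat.card G.edgeSet := by
    have h1 := Set.InjOn.ncard_image hinjOn
    rw [himg, Set.ncard_eq_toFinset_card'] at h1
    simpa using h1.symm
  have hmem : ∀ v, φ v ∈ Set.Icc 1 (Nat.card V + Nat.card G.edgeSet) := fun v => by
    rw [← hun]; exact Or.inl ⟨v, rfl⟩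
  refine ⟨apexLabel φ, ?_, ?_, hinjOn, ?_⟩
  · rintro (_ | v) (_ | w) hvw
    · rfl
    · have := (hmem w).1
      change 0 = φ w at hvw
      omega
    · have := (hmem v).1
      change φ v = 0 at hvw
      omega
    · exact congrArg some (hinj hvw)
  · rw [hcard]
    rintro (_ | v)
    · exact Nat.zero_le _
    · exact (hmem v).2
  · rw [hcard, himg]
end

section
/- For every p ≥ 4, the complete graph K_p is not supergraceful (it admits no total labeling). -/
/-- A perfect ruler of length at least ten cannot contain the mark `1`. -/
lemma no_ruler_one (N : ℕ) (hN : 10 ≤ N) (A : ℕ → Prop) (h0 : A 0) (h1 : A 1)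
    (hle : ∀ a, A a → a ≤ N)
    (hcov : ∀ d, 1 ≤ d → d ≤ N → ∃ a b, A a ∧ A b ∧ a + d = b)
    (hun : ∀ a b c e, A a → A b → A c → A e → a < b → b + c = e + a → a = c) : False := by
  have hNN : A N := by
    obtain ⟨a, b, ha, hb, h⟩ := hcov N (by omega) le_rfl
    have := hle b hb
    have : b = N := by omega
    exact this ▸ hb
  have n2 : ¬ A 2 := fun h => by have := hun 0 1 1 2 h0 h1 h1 h (by omega) (by omega); omega
  have nN1 : ¬ A (N - 1) := fun h => by
    have := hun 0 1 (N - 1) N h0 h1 h hNN (by omega) (by omega); omega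
  have hN2 : A (N - 2) := by
    obtain ⟨a, b, ha, hb, h⟩ := hcov (N - 2) (by omega) (by omega)
    have := hle b hb
    have h3 : a = 0 ∨ a = 1 ∨ a = 2 := by omega
    rcases h3 with rfl | rfl | rfl
    · have : b = N - 2 := by omega
      exact this ▸ hb
    · have : b = N - 1 := by omega
      exact absurd (this ▸ hb) nN1
    · exact absurd ha n2
  have n3 : ¬ A 3 := fun h => by
    have := hun 1 3 (N - 2) N h1 h hN2 hNN (by omega) (by omega); omega
  have nN3 : ¬ A (N - 3) := fun h => by
    have := hun 0 1 (N - 3) (N - 2) h0 h1 h hN2 (by omega) (by omega); omega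
  have nN4 : ¬ A (N - 4) := fun h => by
    have := hun (N - 4) (N - 2) (N - 2) N h hN2 hN2 hNN (by omega) (by omega); omega
  have h4 : A 4 := by
    obtain ⟨a, b, ha, hb, h⟩ := hcov (N - 4) (by omega) (by omega)
    have := hle b hb
    have h3 : a = 0 ∨ a = 1 ∨ a = 2 ∨ a = 3 ∨ a = 4 := by omega
    rcases h3 with rfl | rfl | rfl | rfl | rfl
    · have : b = N - 4 := by omega
      exact absurd (this ▸ hb) nN4
    · have : b = N - 3 := by omega
      exact absurd (this ▸ hb) nN3
    · exact absurd ha n2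
    · exact absurd ha n3
    · exact ha
  have n5 : ¬ A 5 := fun h => by have := hun 0 1 4 5 h0 h1 h4 h (by omega) (by omega); omega
  obtain ⟨a, b, ha, hb, h⟩ := hcov (N - 5) (by omega) (by omega)
  have := hle b hb
  have h3 : a = 0 ∨ a = 1 ∨ a = 2 ∨ a = 3 ∨ a = 4 ∨ a = 5 := by omega
  rcases h3 with rfl | rfl | rfl | rfl | rfl | rfl
  · have : b = N - 5 := by omega
    subst this
    have := hun 1 4 (N - 5) (N - 2) h1 h4 hb hN2 (by omega) (by omega); omega
  · have : b = N - 4 := by omega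
    exact nN4 (this ▸ hb)
  · exact n2 ha
  · exact n3 ha
  · have : b = N - 1 := by omega
    exact nN1 (this ▸ hb)
  · exact n5 ha

/-- There is no perfect ruler of length at least ten. -/
lemma no_ruler (N : ℕ) (hN : 10 ≤ N) (A : ℕ → Prop) (h0 : A 0)
    (hle : ∀ a, A a → a ≤ N)
    (hcov : ∀ d, 1 ≤ d → d ≤ N → ∃ a b, A a ∧ A b ∧ a + d = b)
    (hun : ∀ a b c e, A a → A b → A c → A e → a < b → b + c = e + a → a = c) : False := by
  have hNN : A N := by
    obtain ⟨a, b, ha, hb, h⟩ := hcov N (by omega) le_rfl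
    have := hle b hb
    have : b = N := by omega
    exact this ▸ hb
  obtain ⟨a, b, ha, hb, h⟩ := hcov (N - 1) (by omega) (by omega)
  have := hle b hb
  have h3 : a = 0 ∨ a = 1 := by omega
  rcases h3 with rfl | rfl
  · have : b = N - 1 := by omega
    subst this
    refine no_ruler_one N hN (fun x => x ≤ N ∧ A (N - x)) ⟨by omega, by simpa using hNN⟩
      ⟨by omega, hb⟩ (fun a h => h.1) ?_ ?_
    · intro d hd hd'
      obtain ⟨a, b, ha, hb, h⟩ := hcov d hd hd'
      have := hle b hb
      refine ⟨N - b, N - a, ⟨by omega, ?_⟩, ⟨by omega, ?_⟩, by omega⟩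
      · rwa [show N - (N - b) = b by omega]
      · rwa [show N - (N - a) = a by omega]
    · rintro a b c e ⟨ha, ha'⟩ ⟨hb, hb'⟩ ⟨hc, hc'⟩ ⟨he, he'⟩ hab h
      have := hun (N - b) (N - a) (N - e) (N - c) hb' ha' he' hc' (by omega) (by omega)
      omega
  · exact no_ruler_one N hN A h0 ha hle hcov hun

/-- For every `p ≥ 4`, the complete graph `K_p` is not supergraceful. -/
theorem completeGraph_not_supergraceful (p : ℕ) (hp : 4 ≤ p) :
    ¬ IsSupergraceful (⊤ : SimpleGraph (Fin p)) := by
  rintro ⟨φ, hinj, hE, hdis, hU⟩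
  have hcard : 6 ≤ Nat.card (⊤ : SimpleGraph (Fin p)).edgeSet := by
    rw [Nat.card_eq_fintype_card, ← SimpleGraph.edgeFinset_card,
      SimpleGraph.card_edgeFinset_top_eq_card_choose_two, Fintype.card_fin]
    exact (Nat.choose_le_choose 2 hp)
  have hN : 10 ≤ Nat.card (Fin p) + Nat.card (⊤ : SimpleGraph (Fin p)).edgeSet := by
    rw [Nat.card_fin]; omega
  generalize Nat.card (Fin p) + Nat.card (⊤ : SimpleGraph (Fin p)).edgeSet = N at hN hU
  have hv : ∀ v, 1 ≤ φ v ∧ φ v ≤ N := fun v => by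
    have : φ v ∈ Set.Icc 1 N := hU ▸ Or.inl ⟨v, rfl⟩
    exact this
  have hl : ∀ u v, φ u < φ v → edgeLabel φ s(u, v) = φ v - φ u := fun u v h => by
    simp only [edgeLabel, Sym2.lift_mk]
    exact Nat.dist_eq_sub_of_le h.le
  have he : ∀ u v, φ u < φ v → s(u, v) ∈ (⊤ : SimpleGraph (Fin p)).edgeSet := fun u v h => by
    simp only [SimpleGraph.mem_edgeSet, SimpleGraph.top_adj]
    rintro rfl
    omega
  have hd : ∀ u v w, φ u < φ v → φ w ≠ φ v - φ u := fun u v w h hw =>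
    Set.disjoint_left.1 hdis ⟨w, rfl⟩ ⟨s(u, v), he u v h, (hl u v h).trans hw.symm⟩
  refine no_ruler N hN (fun x => x = 0 ∨ ∃ v, φ v = x) (Or.inl rfl) ?_ ?_ ?_
  · rintro a (rfl | ⟨v, rfl⟩)
    · omega
    · exact (hv v).2
  · intro d h1 h2
    have : d ∈ Set.range φ ∪ edgeLabel φ '' (⊤ : SimpleGraph (Fin p)).edgeSet := hU ▸ ⟨h1, h2⟩
    rcases this with ⟨v, rfl⟩ | ⟨e, hem, rfl⟩
    · exact ⟨0, φ v, Or.inl rfl, Or.inr ⟨v, rfl⟩, by omega⟩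
    · induction e using Sym2.ind with
      | _ u v =>
        have hne : u ≠ v := by simpa using hem
        rcases lt_or_gt_of_ne (hinj.ne hne) with h | h
        · exact ⟨φ u, φ v, Or.inr ⟨u, rfl⟩, Or.inr ⟨v, rfl⟩, by rw [hl u v h]; omega⟩
        · exact ⟨φ v, φ u, Or.inr ⟨v, rfl⟩, Or.inr ⟨u, rfl⟩, by
            rw [Sym2.eq_swap, hl v u h]; omega⟩
  · rintro a b c e ha (rfl | ⟨v, rfl⟩) hc (rfl | ⟨x, rfl⟩) hab h
    · omega
    · omega
    · omega
    · rcases ha with rfl | ⟨u, rfl⟩ <;> rcases hc with rfl | ⟨w, rfl⟩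
      · rfl
      · exact absurd (by omega) (hd w x v (by have := hv v; omega))
      · exact absurd (by omega) (hd u v x hab)
      · have hwx : φ w < φ x := by omega
        have := hE (he u v hab) (he w x hwx) (by rw [hl u v hab, hl w x hwx]; omega)
        rcases Sym2.eq_iff.1 this with ⟨rfl, rfl⟩ | ⟨rfl, rfl⟩
        · rfl
        · omega
end

section
/- Let G be a finite simple graph such that in the join H = K_1 + G every vertex has even degree, and the number of edges q of H satisfies q ≡ 1 (mod 4) or q ≡ 2 (mod 4). Then G is not supergraceful. -/
open Classical in
theorem aux_edge_sum {V : Type*} [Fintype V] (G : SimpleGraph V) (φ : V → ℕ) :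
    ((∑ e ∈ G.edgeFinset, edgeLabel φ e : ℕ) : ZMod 2) =
      ∑ v, (G.degree v : ZMod 2) * (φ v : ZMod 2) := by
  have h1 : ∀ e ∈ G.edgeFinset, ((edgeLabel φ e : ℕ) : ZMod 2) =
      ∑ v ∈ Finset.univ.filter (fun v => v ∈ e), (φ v : ZMod 2) := by
    intro e he
    induction e using Sym2.ind with
    | _ u v =>
      have huv : u ≠ v := by
        rw [SimpleGraph.mem_edgeFinset, SimpleGraph.mem_edgeSet] at he
        exact he.ne
      have hf : Finset.univ.filter (fun w => w ∈ s(u, v)) = {u, v} := by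
        ext w; simp
      rw [hf, Finset.sum_pair huv]
      change ((Nat.dist (φ u) (φ v) : ℕ) : ZMod 2) = _
      rw [← Nat.cast_add, ZMod.natCast_eq_natCast_iff]
      unfold Nat.dist Nat.ModEq
      omega
  rw [Nat.cast_sum, Finset.sum_congr rfl h1,
    Finset.sum_comm' (t' := Finset.univ) (s' := fun v => G.incidenceFinset v)]
  · simp
  · intro e v
    simp [SimpleGraph.mem_incidenceFinset, SimpleGraph.incidenceSet]

theorem aux_card_none {V : Type*} [Fintype V] (G : SimpleGraph V) :
    Nat.card ((addApex G).neighborSet none) = Nat.card V := by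
  have : (addApex G).neighborSet none = Set.range (some : V → Option V) := by
    ext x
    cases x <;> simp [addApex]
  rw [this, Nat.card_range_of_injective (Option.some_injective V)]

open Classical in
theorem aux_card_some {V : Type*} [Fintype V] (G : SimpleGraph V) (v : V) :
    Nat.card ((addApex G).neighborSet (some v)) = G.degree v + 1 := by
  have : (addApex G).neighborSet (some v) = insert none (some '' G.neighborSet v) := by
    ext x
    cases x with
    | none => simp [addApex]
    | some x =>
      simp only [addApex, SimpleGraph.mem_neighborSet, SimpleGraph.fromRel_adj]
      simp [G.adj_comm x v]
      intro h
      exact h.ne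
  rw [this, Nat.card_coe_set_eq, Set.ncard_insert_of_notMem (by simp) (Set.toFinite _),
    Set.ncard_image_of_injective _ (Option.some_injective V), ← Nat.card_coe_set_eq,
    Nat.card_eq_fintype_card, SimpleGraph.card_neighborSet_eq_degree]

open Classical in
theorem aux_card_edges {V : Type*} [Fintype V] (G : SimpleGraph V) :
    Nat.card (addApex G).edgeSet = Nat.card V + Nat.card G.edgeSet := by
  have h1 := (addApex G).sum_degrees_eq_twice_card_edges
  have h2 := G.sum_degrees_eq_twice_card_edges
  have h3 : ∀ x, (addApex G).degree x = Nat.card ((addApex G).neighborSet x) := by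
    intro x
    rw [Nat.card_eq_fintype_card, SimpleGraph.card_neighborSet_eq_degree]
  simp only [h3, Fintype.sum_option, aux_card_none, aux_card_some, Finset.sum_add_distrib] at h1
  rw [h2] at h1
  simp only [Finset.sum_const, Finset.card_univ, smul_eq_mul, mul_one,
    ← Nat.card_eq_fintype_card] at h1
  have e1 : (addApex G).edgeFinset.card = Nat.card (addApex G).edgeSet := by
    rw [SimpleGraph.edgeFinset_card, Nat.card_eq_fintype_card]
  have e2 : G.edgeFinset.card = Nat.card G.edgeSet := by
    rw [SimpleGraph.edgeFinset_card, Nat.card_eq_fintype_card]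
  omega

/-- If every vertex of the join `H = K₁ + G` has even degree and the
number `q` of edges of `H` satisfies `q ≡ 1` or `2 (mod 4)`, then `G` is not
supergraceful. -/
theorem not_supergraceful_of_eulerian_join {V : Type*} [Fintype V]
    (G : SimpleGraph V)
    (heven : ∀ v : Option V, Even (Nat.card ((addApex G).neighborSet v)))
    (hq : Nat.card (addApex G).edgeSet % 4 = 1 ∨ Nat.card (addApex G).edgeSet % 4 = 2) :
    ¬ IsSupergraceful G := by
  classical
  rintro ⟨φ, hinj, hinjE, hdis, hun⟩
  rw [aux_card_edges] at hq
  set n := Nat.card V + Nat.card G.edgeSet with hn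
  have hset : Finset.univ.image φ ∪ G.edgeFinset.image (edgeLabel φ) = Finset.Icc 1 n := by
    rw [← Finset.coe_inj]
    simpa using hun
  have hd : Disjoint (Finset.univ.image φ) (G.edgeFinset.image (edgeLabel φ)) := by
    rw [← Finset.disjoint_coe]
    simpa using hdis
  have hs : ∑ v, φ v + ∑ e ∈ G.edgeFinset, edgeLabel φ e = ∑ i ∈ Finset.Icc 1 n, i := by
    rw [← hset, Finset.sum_union hd, Finset.sum_image (fun a _ b _ h => hinj h),
      Finset.sum_image]
    simpa using hinjE
  have hz : ((∑ i ∈ Finset.Icc 1 n, i : ℕ) : ZMod 2) = 0 := by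
    rw [← hs, Nat.cast_add, aux_edge_sum, Nat.cast_sum, ← Finset.sum_add_distrib]
    apply Finset.sum_eq_zero
    intro v _
    have h := heven (some v)
    rw [aux_card_some] at h
    have h' : ((G.degree v + 1 : ℕ) : ZMod 2) = 0 := (ZMod.natCast_eq_zero_iff_even).2 h
    push_cast at h'
    linear_combination (φ v : ZMod 2) * h'
  rw [ZMod.natCast_eq_zero_iff_even] at hz
  have hg : ∀ m : ℕ, 2 * ∑ i ∈ Finset.Icc 1 m, i = m * (m + 1) := by
    intro m
    induction m with
    | zero => simp
    | succ k ih => rw [Finset.sum_Icc_succ_top (by omega), mul_add, ih]; ring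
  obtain ⟨c, hc⟩ := hz
  have h4 := hg n
  rw [hc] at h4
  have h5 : (n * (n + 1)) % 4 = 0 := by omega
  clear_value n
  have h6 : (n % 4) * ((n % 4 + 1 % 4) % 4) % 4 = 0 := by
    rw [← Nat.add_mod, ← Nat.mul_mod]
    exact h5
  rcases hq with h | h <;> rw [h] at h6 <;> omega
end

section
/- Every graceful tree is supergraceful: if a tree T admits a graceful labeling, then T admits a total labeling. (In particular, the Ringel–Rosa–Kotzig conjecture that all trees are graceful implies that all trees are supergraceful.) -/
theorem edgeLabel_two_mul_add_one {V : Type*} (φ : V → ℕ) (e : Sym2 V) :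
    edgeLabel (fun v => 2 * φ v + 1) e = 2 * edgeLabel φ e := by
  induction e using Sym2.ind with
  | _ u v =>
    simp only [edgeLabel, Sym2.lift_mk, Nat.dist]
    omega

/-- Every graceful tree is supergraceful. -/
theorem tree_supergraceful_of_graceful {V : Type*} [Fintype V]
    (T : SimpleGraph V) (hT : T.IsTree) (h : IsGraceful T) :
    IsSupergraceful T := by
  classical
  obtain ⟨φ, hinj, hle, hE, him⟩ := h
  have hcard : Nat.card T.edgeSet + 1 = Nat.card V := by
    have := hT.card_edgeFinset
    rw [Nat.card_eq_fintype_card, Nat.card_eq_fintype_card, ← this,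
      SimpleGraph.edgeFinset_card]
  generalize hq : Nat.card T.edgeSet = q at *
  have hsurj : ∀ k ≤ q, ∃ v, φ v = k := by
    intro k hk
    have hsub : Finset.univ.image φ ⊆ Finset.range (q + 1) := by
      intro x hx
      simp only [Finset.mem_image, Finset.mem_univ, true_and] at hx
      obtain ⟨v, rfl⟩ := hx
      have := hle v
      simp only [Finset.mem_range]
      omega
    have heq := Finset.eq_of_subset_of_card_le hsub (by
      rw [Finset.card_image_of_injective _ hinj, Finset.card_univ, Finset.card_range,
        hcard, Nat.card_eq_fintype_card])
    have hk' : k ∈ Finset.univ.image φ := by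
      rw [heq, Finset.mem_range]
      omega
    simpa using hk'
  have hmem : ∀ k, (∃ e ∈ T.edgeSet, edgeLabel φ e = k) ↔ 1 ≤ k ∧ k ≤ q := by
    intro k
    have := Set.ext_iff.mp him k
    simpa only [Set.mem_image, Set.mem_Icc] using this
  refine ⟨fun v => 2 * φ v + 1, ?_, ?_, ?_, ?_⟩
  · intro u v huv
    apply hinj
    simp only at huv
    omega
  · intro a ha b hb hab
    rw [edgeLabel_two_mul_add_one, edgeLabel_two_mul_add_one] at hab
    exact hE ha hb (by omega)
  · rw [Set.disjoint_left]
    rintro _ ⟨v, rfl⟩ ⟨e, _, he⟩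
    rw [edgeLabel_two_mul_add_one] at he
    simp only at he
    omega
  · ext k
    rw [hq, ← hcard]
    simp only [Set.mem_union, Set.mem_range, Set.mem_image, Set.mem_Icc]
    constructor
    · rintro (⟨v, rfl⟩ | ⟨e, he, rfl⟩)
      · have := hle v
        omega
      · rw [edgeLabel_two_mul_add_one]
        have := (hmem _).1 ⟨e, he, rfl⟩
        omega
    · rintro ⟨h1, h2⟩
      rcases Nat.even_or_odd' k with ⟨m, rfl | rfl⟩
      · right
        obtain ⟨e, he, hm⟩ := (hmem m).2 (by omega)
        exact ⟨e, he, by rw [edgeLabel_two_mul_add_one, hm]⟩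
      · left
        obtain ⟨v, hv⟩ := hsurj m (by omega)
        exact ⟨v, by rw [hv]⟩
end

section
/- Let G be a supergraceful graph with p vertices and q edges admitting a total labeling φ such that 1 is a vertex label (1 ∈ φ(V)). Then for every integer t ≥ 0 there exists a supergraceful graph with p + t vertices and q + t edges containing G as an induced subgraph. -/
theorem edgeLabel_map {V W : Type*} (f : V → W) (ψ : W → ℕ) (e : Sym2 V) :
    edgeLabel ψ (Sym2.map f e) = edgeLabel (ψ ∘ f) e := by
  induction e with
  | h x y => simp [edgeLabel]

theorem total_transfer {V W : Type*} (G : SimpleGraph V) (H : SimpleGraph W) (f : H ≃g G)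
    (φ : V → ℕ) (h : IsTotalLabeling G φ) : IsTotalLabeling H (φ ∘ f) := by
  obtain ⟨ha, hb, hc, hd⟩ := h
  have hcard : Nat.card W = Nat.card V := Nat.card_congr f.toEquiv
  have hcard2 : Nat.card H.edgeSet = Nat.card G.edgeSet := Nat.card_congr f.mapEdgeSet
  have hr : Set.range (φ ∘ f) = Set.range φ := f.surjective.range_comp φ
  have hmem : ∀ e ∈ H.edgeSet, Sym2.map f e ∈ G.edgeSet := by
    intro e he
    exact (f.mapEdgeSet ⟨e, he⟩).2
  have hi : edgeLabel (φ ∘ f) '' H.edgeSet = edgeLabel φ '' G.edgeSet := by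
    ext n
    constructor
    · rintro ⟨e, he, rfl⟩
      exact ⟨_, hmem e he, edgeLabel_map f φ e⟩
    · rintro ⟨e, he, rfl⟩
      obtain ⟨⟨e', he'⟩, hh⟩ := f.mapEdgeSet.surjective ⟨e, he⟩
      have h2 : Sym2.map f e' = e := congrArg Subtype.val hh
      exact ⟨e', he', by rw [← edgeLabel_map, h2]⟩
  refine ⟨ha.comp f.injective, ?_, ?_, ?_⟩
  · intro e he e' he' hee
    rw [← edgeLabel_map, ← edgeLabel_map] at hee
    exact Sym2.map.injective f.injective (hb (hmem e he) (hmem e' he') hee)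
  · rw [hr, hi]; exact hc
  · rw [hr, hi, hcard, hcard2]; exact hd

theorem total_step {V : Type*} [Fintype V] (G : SimpleGraph V)
    (φ : V → ℕ) (h : IsTotalLabeling G φ) (h1 : 1 ∈ Set.range φ) :
    ∃ (H : SimpleGraph (Option V)) (ψ : Option V → ℕ),
      Nat.card H.edgeSet = Nat.card G.edgeSet + 1 ∧
      IsTotalLabeling H ψ ∧ 1 ∈ Set.range ψ ∧ Nonempty (G ↪g H) := by
  obtain ⟨v0, hv0⟩ := h1
  obtain ⟨ha, hb, hc, hd⟩ := h
  set N := Nat.card V + Nat.card G.edgeSet with hN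
  let H : SimpleGraph (Option V) :=
    G.map (Function.Embedding.some) ⊔ SimpleGraph.edge none (some v0)
  let ψ : Option V → ℕ := fun o => o.elim (N + 2) φ
  have hψ : ψ ∘ some = φ := rfl
  have hE : H.edgeSet = insert s(none, some v0) (Sym2.map some '' G.edgeSet) := by
    simp only [H, SimpleGraph.edgeSet_sup, SimpleGraph.edgeSet_map]
    rw [SimpleGraph.edge_edgeSet_of_ne (by simp)]
    rw [Set.union_comm]
    rfl
  have hnot : s(none, some v0) ∉ Sym2.map some '' G.edgeSet := by
    rintro ⟨e, -, he⟩
    induction e with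
    | h x y => simp at he
  have hcard : Nat.card H.edgeSet = Nat.card G.edgeSet + 1 := by
    rw [hE, Nat.card_coe_set_eq, Nat.card_coe_set_eq,
      Set.ncard_insert_of_notMem hnot (Set.toFinite _),
      Set.ncard_image_of_injective _ (Sym2.map.injective (Option.some_injective V))]
  have hle : ∀ v, 1 ≤ φ v ∧ φ v ≤ N := fun v => by
    have : φ v ∈ Set.Icc 1 N := hd ▸ Or.inl ⟨v, rfl⟩
    exact this
  have hle2 : ∀ e ∈ G.edgeSet, 1 ≤ edgeLabel φ e ∧ edgeLabel φ e ≤ N := fun e he => by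
    have : edgeLabel φ e ∈ Set.Icc 1 N := hd ▸ Or.inr ⟨e, he, rfl⟩
    exact this
  have hnew : edgeLabel ψ s(none, some v0) = N + 1 := by
    simp [edgeLabel, ψ, hv0, Nat.dist]
  have himg : edgeLabel ψ '' H.edgeSet = insert (N + 1) (edgeLabel φ '' G.edgeSet) := by
    rw [hE, Set.image_insert_eq, hnew, Set.image_image]
    simp only [edgeLabel_map, hψ]
  have hrange : Set.range ψ = insert (N + 2) (Set.range φ) := by
    ext n
    simp [ψ, Option.exists, eq_comm]
  refine ⟨H, ψ, hcard, ⟨?_, ?_, ?_, ?_⟩, ⟨some v0, hv0⟩, ⟨⟨Function.Embedding.some, ?_⟩⟩⟩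
  · rintro (_ | x) (_ | y) hxy
    · rfl
    · have := hle y
      simp [ψ] at hxy
      omega
    · have := hle x
      simp [ψ] at hxy
      omega
    · exact congrArg some (ha hxy)
  · rw [hE]
    rintro _ (rfl | ⟨e, he, rfl⟩) _ (rfl | ⟨e', he', rfl⟩) hee
    · rfl
    · rw [hnew, edgeLabel_map, hψ] at hee
      have := hle2 e' he'
      omega
    · rw [hnew, edgeLabel_map, hψ] at hee
      have := hle2 e he
      omega
    · rw [edgeLabel_map, edgeLabel_map, hψ] at hee
      rw [hb he he' hee]
  · rw [himg, hrange, Set.disjoint_left]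
    rintro n (rfl | ⟨x, rfl⟩) (hn | ⟨e, he, hn⟩)
    · omega
    · have := hle2 e he
      omega
    · have := hle x
      omega
    · exact Set.disjoint_left.1 hc ⟨x, rfl⟩ ⟨e, he, hn⟩
  · have hNN : Nat.card (Option V) + Nat.card H.edgeSet = N + 2 := by
      rw [hcard, Finite.card_option]
      omega
    rw [hNN, himg, hrange]
    ext n
    have hn := Set.ext_iff.1 hd n
    simp only [Set.mem_union, Set.mem_insert_iff, Set.mem_Icc] at hn ⊢
    constructor
    · rintro ((h | h) | (h | h))
      · omega
      · have := hn.1 (Or.inl h)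
        omega
      · omega
      · have := hn.1 (Or.inr h)
        omega
    · rintro ⟨h1, h2⟩
      by_cases h3 : n ≤ N
      · rcases hn.2 ⟨h1, h3⟩ with h | h <;> simp [h]
      · have : n = N + 1 ∨ n = N + 2 := by omega
        rcases this with h | h <;> simp [h]
  · intro a b
    have := SimpleGraph.map_adj_apply (G := G) (f := Function.Embedding.some) (a := a) (b := b)
    simpa [H, SimpleGraph.edge_adj] using this

theorem total_iter {V : Type*} [Fintype V] (G : SimpleGraph V)
    (φ : V → ℕ) (h : IsTotalLabeling G φ) (h1 : 1 ∈ Set.range φ) (t : ℕ) :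
    ∃ (W : Type) (_ : Fintype W) (H : SimpleGraph W) (ψ : W → ℕ),
      Nat.card W = Nat.card V + t ∧
      Nat.card H.edgeSet = Nat.card G.edgeSet + t ∧
      IsTotalLabeling H ψ ∧ 1 ∈ Set.range ψ ∧ Nonempty (G ↪g H) := by
  induction t with
  | zero =>
    let e : Fin (Fintype.card V) ≃ V := (Fintype.equivFin V).symm
    let f : G.comap e ≃g G := SimpleGraph.Iso.comap e G
    refine ⟨Fin (Fintype.card V), inferInstance, G.comap e, φ ∘ f, ?_, ?_,
      total_transfer _ _ f φ h, ?_, ⟨f.symm.toEmbedding⟩⟩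
    · simp
    · exact Nat.card_congr f.mapEdgeSet
    · rw [f.surjective.range_comp φ]
      exact h1
  | succ t ih =>
    obtain ⟨W, _, H, ψ, hW, hH, hψ, h1', ⟨g⟩⟩ := ih
    obtain ⟨H', ψ', hc, ht, h1'', ⟨g'⟩⟩ := total_step H ψ hψ h1'
    refine ⟨Option W, inferInstance, H', ψ', ?_, ?_, ht, h1'', ⟨g'.comp g⟩⟩
    · rw [Finite.card_option, hW, add_assoc]
    · rw [hc, hH, add_assoc]

/-- If `G` is a supergraceful graph with `p` vertices and `q` edges
admitting a total labeling in which `1` is a vertex label, then for every `t ≥ 0`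
there is a supergraceful graph with `p + t` vertices and `q + t` edges containing
`G` as an induced subgraph. -/
theorem supergraceful_extension {V : Type*} [Fintype V] (G : SimpleGraph V)
    (φ : V → ℕ) (h : IsTotalLabeling G φ) (h1 : 1 ∈ Set.range φ) (t : ℕ) :
    ∃ (W : Type) (_ : Fintype W) (H : SimpleGraph W),
      Nat.card W = Nat.card V + t ∧
      Nat.card H.edgeSet = Nat.card G.edgeSet + t ∧
      IsSupergraceful H ∧ Nonempty (G ↪g H) := by
  obtain ⟨W, hf, H, ψ, hW, hH, hψ, -, hg⟩ := total_iter G φ h h1 t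
  exact ⟨W, hf, H, hW, hH, ⟨ψ, hψ⟩, hg⟩
end

section
/- Every finite simple graph can be embedded into a supergraceful graph; that is, for every finite simple graph G there exists a supergraceful graph H (not necessarily connected) containing an induced subgraph isomorphic to G. -/
theorem pow3_lt {i j k l : ℕ} (hij : j < i) (h : k < i) : 3 ^ k - 3 ^ l < 3 ^ i - 3 ^ j := by
  obtain ⟨i, rfl⟩ : ∃ m, i = m + 1 := ⟨i - 1, by omega⟩
  have h1 : 3 ^ j ≤ 3 ^ i := Nat.pow_le_pow_right (by norm_num) (by omega)
  have h2 : 3 ^ k ≤ 3 ^ i := Nat.pow_le_pow_right (by norm_num) (by omega)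
  have h3 : 0 < 3 ^ i := by positivity
  have h4 : 0 < 3 ^ l := by positivity
  rw [pow_succ]
  omega

theorem pow3_inj {i j k l : ℕ} (hij : j < i) (hkl : l < k)
    (h : 3 ^ i - 3 ^ j = 3 ^ k - 3 ^ l) : i = k ∧ j = l := by
  have hik : i = k := by
    rcases lt_trichotomy i k with h1 | h1 | h1
    · have := pow3_lt (l := j) hkl h1
      omega
    · exact h1
    · have := pow3_lt (l := l) hij h1
      omega
  subst hik
  refine ⟨rfl, ?_⟩
  have h1 : 3 ^ j < 3 ^ i := Nat.pow_lt_pow_right (by norm_num) hij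
  have h2 : 3 ^ l < 3 ^ i := Nat.pow_lt_pow_right (by norm_num) hkl
  exact Nat.pow_right_injective (by norm_num) (show 3 ^ j = 3 ^ l by omega)

theorem dist_pow3 {i j : ℕ} (h : j < i) : Nat.dist (3 ^ i) (3 ^ j) = 3 ^ i - 3 ^ j :=
  Nat.dist_eq_sub_of_le_right (Nat.pow_le_pow_right (by norm_num) h.le)

theorem dist_pow3_inj {i j k l : ℕ} (hij : i ≠ j) (hkl : k ≠ l)
    (h : Nat.dist (3 ^ i) (3 ^ j) = Nat.dist (3 ^ k) (3 ^ l)) :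
    (i = k ∧ j = l) ∨ (i = l ∧ j = k) := by
  rcases lt_or_gt_of_ne hij with h1 | h1 <;> rcases lt_or_gt_of_ne hkl with h2 | h2
  · rw [Nat.dist_comm, dist_pow3 h1, Nat.dist_comm, dist_pow3 h2] at h
    have := pow3_inj h1 h2 h
    omega
  · rw [Nat.dist_comm, dist_pow3 h1, dist_pow3 h2] at h
    have := pow3_inj h1 h2 h
    omega
  · rw [dist_pow3 h1, Nat.dist_comm, dist_pow3 h2] at h
    have := pow3_inj h1 h2 h
    omega
  · rw [dist_pow3 h1, dist_pow3 h2] at h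
    have := pow3_inj h1 h2 h
    omega

theorem dist_pow3_ne (i j k : ℕ) : Nat.dist (3 ^ i) (3 ^ j) ≠ 3 ^ k := by
  have h : ∀ m : ℕ, 3 ^ m % 2 = 1 := fun m => by
    rw [Nat.pow_mod]; simp
  have h1 := h i
  have h2 := h j
  have h3 := h k
  unfold Nat.dist
  omega

/-- Every finite simple graph can be embedded into a supergraceful
graph as an induced subgraph. -/
theorem embed_into_supergraceful {V : Type*} [Fintype V] (G : SimpleGraph V) :
    ∃ (W : Type) (_ : Fintype W) (H : SimpleGraph W),
      IsSupergraceful H ∧ Nonempty (G ↪g H) := by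
  classical
  let e := Fintype.equivFin V
  let n := Fintype.card V
  let f : V ↪ ℕ := ⟨fun v => 3 ^ (e v : ℕ), fun a b h => by
    have h' : (e a : ℕ) = e b := Nat.pow_right_injective (by norm_num) h
    exact e.injective (Fin.ext h')⟩
  have hf : ∀ v, f v = 3 ^ (e v : ℕ) := fun v => rfl
  have hfN : ∀ v, f v ∈ Finset.Icc 1 (3 ^ n) := fun v => by
    rw [hf, Finset.mem_Icc]
    exact ⟨Nat.one_le_pow _ _ (by norm_num), Nat.pow_le_pow_right (by norm_num) (e v).2.le⟩
  let E : Set ℕ := {m | ∃ a b, G.Adj a b ∧ m = Nat.dist (f a) (f b)}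
  have hfE : ∀ v, f v ∉ E := by
    rintro v ⟨a, b, -, h⟩
    exact dist_pow3_ne _ _ _ h.symm
  have hEN : ∀ m ∈ E, m ∈ Finset.Icc 1 (3 ^ n) := by
    rintro m ⟨a, b, hab, rfl⟩
    have h1 := Finset.mem_Icc.1 (hfN a)
    have h2 := Finset.mem_Icc.1 (hfN b)
    have h3 : f a ≠ f b := fun h => hab.ne (f.injective h)
    rw [Finset.mem_Icc]
    unfold Nat.dist
    omega
  let S : Finset ℕ := (Finset.Icc 1 (3 ^ n)).filter (· ∉ E)
  have hS : ∀ v, f v ∈ S := fun v => Finset.mem_filter.2 ⟨hfN v, hfE v⟩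
  let g : V ↪ S := ⟨fun v => ⟨f v, hS v⟩, fun a b h => f.injective (congrArg Subtype.val h)⟩
  have hg : ∀ v, ((g v : S) : ℕ) = 3 ^ (e v : ℕ) := fun v => rfl
  refine ⟨S, inferInstance, G.map g, ⟨Subtype.val, ?_⟩, ⟨SimpleGraph.Embedding.map g G⟩⟩
  have himg : edgeLabel (Subtype.val : S → ℕ) '' (G.map g).edgeSet = E := by
    ext m
    constructor
    · rintro ⟨x, hx, rfl⟩
      induction x with | _ x y
      rw [SimpleGraph.mem_edgeSet, SimpleGraph.map_adj] at hx
      obtain ⟨a, b, hab, rfl, rfl⟩ := hx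
      exact ⟨a, b, hab, rfl⟩
    · rintro ⟨a, b, hab, rfl⟩
      refine ⟨s(g a, g b), ?_, rfl⟩
      rw [SimpleGraph.mem_edgeSet, SimpleGraph.map_adj]
      exact ⟨a, b, hab, rfl, rfl⟩
  have hinj : Set.InjOn (edgeLabel (Subtype.val : S → ℕ)) (G.map g).edgeSet := by
    intro x hx y hy h
    induction x with | _ x1 x2
    induction y with | _ y1 y2
    rw [SimpleGraph.mem_edgeSet, SimpleGraph.map_adj] at hx hy
    obtain ⟨a, b, hab, rfl, rfl⟩ := hx
    obtain ⟨c, d, hcd, rfl, rfl⟩ := hy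
    have ne : ∀ {a b}, G.Adj a b → (e a : ℕ) ≠ e b := fun hab h =>
      hab.ne (e.injective (Fin.ext h))
    change Nat.dist (3 ^ (e a : ℕ)) (3 ^ (e b : ℕ)) = Nat.dist (3 ^ (e c : ℕ)) (3 ^ (e d : ℕ)) at h
    rcases dist_pow3_inj (ne hab) (ne hcd) h with ⟨h1, h2⟩ | ⟨h1, h2⟩
    · rw [e.injective (Fin.ext h1), e.injective (Fin.ext h2)]
    · rw [e.injective (Fin.ext h1), e.injective (Fin.ext h2), Sym2.eq_swap]
  have hrange : Set.range (Subtype.val : S → ℕ) = (S : Set ℕ) := Subtype.range_coe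
  have hdisj : Disjoint (S : Set ℕ) E := by
    rw [Set.disjoint_left]
    intro m hm
    exact (Finset.mem_filter.1 (Finset.mem_coe.1 hm)).2
  have hun : (S : Set ℕ) ∪ E = Set.Icc 1 (3 ^ n) := by
    ext m
    rw [← Finset.coe_Icc]
    simp only [Set.mem_union, Finset.mem_coe]
    constructor
    · rintro (h | h)
      · exact (Finset.mem_filter.1 h).1
      · exact hEN m h
    · intro h
      by_cases hm : m ∈ E
      · exact Or.inr hm
      · exact Or.inl (Finset.mem_filter.2 ⟨h, hm⟩)
  have hEfin : E.Finite := (Finset.finite_toSet (Finset.Icc 1 (3 ^ n))).subset hEN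
  have hcard : Nat.card S + Nat.card (G.map g).edgeSet = 3 ^ n := by
    have h1 : Nat.card (G.map g).edgeSet = E.ncard := by
      rw [← himg, Set.ncard_image_of_injOn hinj, Nat.card_coe_set_eq]
    have h2 : Nat.card S = (S : Set ℕ).ncard := by simp
    rw [h1, h2, ← Set.ncard_union_eq hdisj S.finite_toSet hEfin, hun, ← Finset.coe_Icc,
      Set.ncard_coe_finset]
    simp
  refine ⟨Subtype.val_injective, hinj, ?_, ?_⟩
  · rw [himg, hrange]; exact hdisj
  · rw [himg, hrange, hun, hcard]
end

section
/- For every even integer n ≥ 8 there exists a connected graph on n vertices with n + 1 edges that admits no prime labeling, and for every odd integer n ≥ 9 there exists a connected graph on n vertices with n + 2 edges that admits no prime labeling. Hence the minimum number of edges μ(n) of a connected non-prime graph of order n satisfies μ(n) ≤ n + 1 for even n ≥ 8 and μ(n) ≤ n + 2 for odd n ≥ 9. -/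
/-- `α` is a prime labeling of the graph `G` of order `n`: a bijection from the
vertex set onto `{1, 2, ..., n}` such that the labels of adjacent vertices are coprime. -/
def IsPrimeLabeling {V : Type*} (G : SimpleGraph V) (α : V → ℕ) : Prop :=
  Function.Injective α ∧
  Set.range α = Set.Icc 1 (Nat.card V) ∧
  ∀ u v, G.Adj u v → Nat.Coprime (α u) (α v)

/-- A graph is prime if it admits a prime labeling. -/
def IsPrimeGraph {V : Type*} (G : SimpleGraph V) : Prop :=
  ∃ α : V → ℕ, IsPrimeLabeling G α

/-- If the vertices are covered by fewer than `n / 2` cliques, the graph is not prime. -/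
theorem not_prime_of_blocks {n m : ℕ} (G : SimpleGraph (Fin n)) (b : Fin n → ℕ)
    (hb : ∀ v, b v < m) (hadj : ∀ u v, u < v → b u = b v → G.Adj u v)
    (hm : m < n / 2) : ¬ IsPrimeGraph G := by
  rintro ⟨α, -, hr, hc⟩
  have hex : ∀ i : Fin (n / 2), ∃ v, α v = 2 * (i.1 + 1) := by
    intro i
    have : 2 * (i.1 + 1) ∈ Set.range α := by
      rw [hr, Nat.card_fin, Set.mem_Icc]
      omega
    exact this
  choose f hf using hex
  obtain ⟨i, j, hij, he⟩ := Fintype.exists_ne_map_eq_of_card_lt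
    (fun i : Fin (n / 2) => (⟨b (f i), hb _⟩ : Fin m)) (by simpa using hm)
  have he' : b (f i) = b (f j) := by simpa using he
  have hne : f i ≠ f j := by
    intro h
    apply hij
    have h1 := hf i
    rw [h, hf j] at h1
    ext
    omega
  have hA : G.Adj (f i) (f j) := by
    rcases lt_or_gt_of_ne hne with h | h
    · exact hadj _ _ h he'
    · exact (hadj _ _ h he'.symm).symm
  have := hc _ _ hA
  rw [hf, hf] at this
  exact Nat.not_coprime_of_dvd_of_dvd (by norm_num : 1 < 2) ⟨_, rfl⟩ ⟨_, rfl⟩ this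

/-- The ordered pairs: path edges `(i, i+1)` and chords `(3i, 3i+2)`. -/
def edgeSrc (n k : ℕ) (hn : 3 * k ≤ n) : Fin (n - 1) ⊕ Fin k → Fin n × Fin n
  | Sum.inl i => (⟨i.1, by omega⟩, ⟨i.1 + 1, by omega⟩)
  | Sum.inr i => (⟨3 * i.1, by omega⟩, ⟨3 * i.1 + 2, by omega⟩)

theorem edgeSrc_lt (n k : ℕ) (hn : 3 * k ≤ n) (x) :
    (edgeSrc n k hn x).1 < (edgeSrc n k hn x).2 := by
  rcases x with i | i <;> simp [edgeSrc, Fin.lt_def]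

theorem edgeSrc_inj (n k : ℕ) (hn : 3 * k ≤ n) :
    Function.Injective fun x => s((edgeSrc n k hn x).1, (edgeSrc n k hn x).2) := by
  intro x y h
  rcases x with ⟨i, hi⟩ | ⟨i, hi⟩ <;> rcases y with ⟨j, hj⟩ | ⟨j, hj⟩ <;>
    simp [edgeSrc, Fin.ext_iff] at h ⊢ <;> omega

theorem exists_nonprime (n k : ℕ) (hk : 1 ≤ k) (hn : 3 * k ≤ n) (hpar : 2 ∣ n - 3 * k)
    (hlt : k + (n - 3 * k) / 2 < n / 2) :
    ∃ G : SimpleGraph (Fin n), G.Connected ∧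
      Nat.card G.edgeSet = n - 1 + k ∧ ¬ IsPrimeGraph G := by
  set E : Set (Sym2 (Fin n)) :=
    Set.range fun x => s((edgeSrc n k hn x).1, (edgeSrc n k hn x).2) with hE
  have hset : (SimpleGraph.fromEdgeSet E).edgeSet = E := by
    rw [SimpleGraph.edgeSet_fromEdgeSet, sdiff_eq_left, Set.disjoint_left]
    rintro _ ⟨x, rfl⟩ h
    exact (edgeSrc_lt n k hn x).ne (by simpa using h)
  have hmem : ∀ x, (SimpleGraph.fromEdgeSet E).Adj (edgeSrc n k hn x).1 (edgeSrc n k hn x).2 := by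
    intro x
    rw [SimpleGraph.fromEdgeSet_adj]
    exact ⟨⟨x, rfl⟩, (edgeSrc_lt n k hn x).ne⟩
  have hpath : ∀ u v : Fin n, u.1 + 1 = v.1 → (SimpleGraph.fromEdgeSet E).Adj u v := by
    intro u v h
    have := hmem (Sum.inl ⟨u.1, by omega⟩)
    have e : v = ⟨u.1 + 1, by omega⟩ := Fin.ext h.symm
    rw [e]
    exact this
  refine ⟨SimpleGraph.fromEdgeSet E, ?_, ?_, ?_⟩
  · obtain ⟨m, rfl⟩ : ∃ m, n = m + 1 := ⟨n - 1, by omega⟩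
    refine (SimpleGraph.pathGraph_connected m).mono ?_
    intro u v h
    rw [SimpleGraph.pathGraph_adj] at h
    rcases h with h | h
    · exact hpath _ _ h
    · exact (hpath _ _ h).symm
  · rw [hset, hE, Nat.card_range_of_injective (edgeSrc_inj n k hn)]
    simp
  · refine not_prime_of_blocks _
      (fun v => if v.1 < 3 * k then v.1 / 3 else k + (v.1 - 3 * k) / 2) (fun v => ?_) ?_ hlt
    · have := v.2
      split_ifs <;> omega
    · intro u v huv hb
      rw [Fin.lt_def] at huv
      have h12 : u.1 + 1 = v.1 ∨ (u.1 + 2 = v.1 ∧ u.1 % 3 = 0 ∧ v.1 < 3 * k) := by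
        split_ifs at hb <;> omega
      rcases h12 with h | ⟨h, h3, hv⟩
      · exact hpath _ _ h
      · have := hmem (Sum.inr ⟨u.1 / 3, by omega⟩)
        have e1 : u = (edgeSrc n k hn (Sum.inr ⟨u.1 / 3, by omega⟩)).1 := by
          apply Fin.ext
          simp only [edgeSrc]
          omega
        have e2 : v = (edgeSrc n k hn (Sum.inr ⟨u.1 / 3, by omega⟩)).2 := by
          apply Fin.ext
          simp only [edgeSrc]
          omega
        rw [← e1, ← e2] at this
        exact this

/-- For every even `n ≥ 8` there is a connected non-prime graph on `n`
vertices with `n + 1` edges, and for every odd `n ≥ 9` there is a connected non-prime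
graph on `n` vertices with `n + 2` edges; hence `μ(n) ≤ n + 1` for even `n ≥ 8` and
`μ(n) ≤ n + 2` for odd `n ≥ 9`. -/
theorem nonprime_connected_few_edges (n : ℕ) :
    (8 ≤ n → Even n →
      ∃ G : SimpleGraph (Fin n), G.Connected ∧
        Nat.card G.edgeSet = n + 1 ∧ ¬ IsPrimeGraph G) ∧
    (9 ≤ n → Odd n →
      ∃ G : SimpleGraph (Fin n), G.Connected ∧
        Nat.card G.edgeSet = n + 2 ∧ ¬ IsPrimeGraph G) := by
  refine ⟨fun hn he => ?_, fun hn ho => ?_⟩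
  · obtain ⟨r, rfl⟩ := he
    obtain ⟨G, h1, h2, h3⟩ := exists_nonprime (r + r) 2 (by omega) (by omega) (by omega) (by omega)
    exact ⟨G, h1, by omega, h3⟩
  · obtain ⟨r, rfl⟩ := ho
    obtain ⟨G, h1, h2, h3⟩ :=
      exists_nonprime (2 * r + 1) 3 (by omega) (by omega) (by omega) (by omega)
    exact ⟨G, h1, by omega, h3⟩
end

section
/- For every integer n ≥ 8 there exists a (not necessarily connected) graph on n vertices with exactly n edges that admits no prime labeling; hence the minimum number of edges μ'(n) of a non-prime graph of order n satisfies μ'(n) ≤ n for all n ≥ 8. (Such graphs are given by t·K_3 when n = 3t, by (t−1)·K_3 ∪ C_4 when n = 3t + 1, and by (t−1)·K_3 ∪ C_5 when n = 3t + 2.) -/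
/-- If the vertices `0, ..., n-1` are split into fewer than `n / 2` classes by `f`, and all pairs
inside a class are listed among `n` pairs `(p i, q i)`, there is a non-prime graph with `n` edges:
the `n / 2` even labels would have to lie in different classes. -/
lemma nonprime_of_classes (n : ℕ) (hn : 8 ≤ n) (k : ℕ) (hk : k < n / 2) (f p q : ℕ → ℕ)
    (hf : ∀ i, i < n → f i < k)
    (hpq : ∀ a b, a < b → b < n → f a = f b → ∃ i, i < n ∧ p i = a ∧ q i = b) :
    ∃ G : SimpleGraph (Fin n), Nat.card G.edgeSet = n ∧ ¬ IsPrimeGraph G := by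
  classical
  have hn0 : 0 < n := by omega
  let e : Fin n → Sym2 (Fin n) := fun i =>
    s(⟨p i % n, Nat.mod_lt _ hn0⟩, ⟨q i % n, Nat.mod_lt _ hn0⟩)
  let E : Finset (Sym2 (Fin n)) := (Finset.univ.image e).filter (fun z => ¬ z.IsDiag)
  have hE : E.card ≤ n := by
    refine (Finset.card_filter_le _ _).trans (Finset.card_image_le.trans ?_)
    simp
  have hEmem : ∀ a b : Fin n, a < b → f a = f b → s(a, b) ∈ E := by
    intro a b hab hfab
    obtain ⟨i, hi, h1, h2⟩ := hpq a b hab b.2 hfab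
    refine Finset.mem_filter.2 ⟨Finset.mem_image.2 ⟨⟨i, hi⟩, Finset.mem_univ _, ?_⟩, ?_⟩
    · simp only [e, h1, h2, Nat.mod_eq_of_lt a.2, Nat.mod_eq_of_lt b.2]
    · simpa using hab.ne
  have hsub : E ⊆ (⊤ : SimpleGraph (Fin n)).edgeFinset := by
    intro z hz
    have := (Finset.mem_filter.1 hz).2
    simpa using this
  have htop : n ≤ (⊤ : SimpleGraph (Fin n)).edgeFinset.card := by
    rw [SimpleGraph.card_edgeFinset_top_eq_card_choose_two, Fintype.card_fin, Nat.choose_two_right,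
      Nat.le_div_iff_mul_le (by norm_num)]
    exact Nat.mul_le_mul_left n (by omega)
  obtain ⟨F, hEF, hFt, hF⟩ := Finset.exists_subsuperset_card_eq hsub hE htop
  have hedge : (SimpleGraph.fromEdgeSet (F : Set (Sym2 (Fin n)))).edgeSet = F := by
    rw [SimpleGraph.edgeSet_fromEdgeSet]
    ext z
    simp only [Set.mem_sdiff, Finset.mem_coe]
    refine ⟨fun h => h.1, fun h => ⟨h, ?_⟩⟩
    have := hFt h
    simpa using this
  refine ⟨SimpleGraph.fromEdgeSet (F : Set (Sym2 (Fin n))), ?_, ?_⟩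
  · rw [hedge]
    simpa using hF
  rintro ⟨α, hinj, hrange, hcop⟩
  have hrange' : ∀ m, 1 ≤ m → m ≤ n → ∃ v, α v = m := by
    intro m h1 h2
    have : m ∈ Set.range α := by
      rw [hrange]
      simpa using ⟨h1, h2⟩
    exact this
  have hx : ∀ j : Fin (n / 2), ∃ v, α v = 2 * (j.1 + 1) := fun j =>
    hrange' _ (by omega) (by have := j.2; omega)
  choose g hg using hx
  obtain ⟨x, y, hxy, hfxy⟩ := Fintype.exists_ne_map_eq_of_card_lt
    (fun j : Fin (n / 2) => (⟨f (g j), hf _ (g j).2⟩ : Fin k)) (by simpa using hk)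
  have hfxy' : f (g x) = f (g y) := by simpa using hfxy
  have hne : g x ≠ g y := by
    intro h
    have h1 := hg x
    have h2 := hg y
    rw [h] at h1
    exact hxy (Fin.ext (by omega))
  have hadj : (SimpleGraph.fromEdgeSet (F : Set (Sym2 (Fin n)))).Adj (g x) (g y) := by
    rw [SimpleGraph.fromEdgeSet_adj]
    refine ⟨?_, hne⟩
    rcases lt_or_gt_of_ne hne with h | h
    · exact hEF (hEmem _ _ h hfxy')
    · rw [Sym2.eq_swap]
      exact hEF (hEmem _ _ h hfxy'.symm)
  have := hcop _ _ hadj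
  rw [hg, hg] at this
  exact Nat.not_coprime_of_dvd_of_dvd (by norm_num) (Dvd.intro _ rfl) (Dvd.intro _ rfl) this

/-- For every `n ≥ 8` there is a (not necessarily connected) non-prime
graph on `n` vertices with exactly `n` edges; hence `μ'(n) ≤ n` for all `n ≥ 8`. -/
theorem nonprime_graph_n_edges (n : ℕ) (hn : 8 ≤ n) :
    ∃ G : SimpleGraph (Fin n), Nat.card G.edgeSet = n ∧ ¬ IsPrimeGraph G := by
  rcases Nat.even_or_odd' n with ⟨m, rfl | rfl⟩
  · -- a complete graph on four vertices and a matching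
    refine nonprime_of_classes _ hn (m - 1) (by omega)
      (fun i => if i < 4 then 0 else i / 2 - 1)
      (fun i => if i = 0 then 0 else if i = 1 then 1 else if i = 2 then 2 else if i = 3 then 0
        else if i = 5 then 0 else if i = 7 then 1 else i)
      (fun i => if i = 0 then 1 else if i = 1 then 2 else if i = 2 then 3 else if i = 3 then 3
        else if i = 5 then 2 else if i = 7 then 3 else i + 1) ?_ ?_
    · intro i hi
      split_ifs <;> omega
    · intro a b hab hb h
      by_cases h4 : b < 4
      · have ha : a < 4 := by omega
        interval_cases b <;> interval_cases a
        · exact ⟨0, by omega, rfl, rfl⟩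
        · exact ⟨5, by omega, rfl, rfl⟩
        · exact ⟨1, by omega, rfl, rfl⟩
        · exact ⟨3, by omega, rfl, rfl⟩
        · exact ⟨7, by omega, rfl, rfl⟩
        · exact ⟨2, by omega, rfl, rfl⟩
      · refine ⟨a, by omega, ?_, ?_⟩ <;> split_ifs at h ⊢ <;> omega
  · -- three triangles and a matching
    refine nonprime_of_classes _ hn (m - 1) (by omega)
      (fun i => if i < 9 then i / 3 else 3 + (i - 9) / 2)
      (fun i => if i < 9 then (if i % 3 = 2 then i - 2 else i) else i)
      (fun i => if i < 9 then (if i % 3 = 2 then i else i + 1) else i + 1) ?_ ?_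
    · intro i hi
      split_ifs <;> omega
    · intro a b hab hb h
      by_cases h2 : b = a + 2
      · refine ⟨b, by omega, ?_, ?_⟩ <;> split_ifs at h ⊢ <;> omega
      · refine ⟨a, by omega, ?_, ?_⟩ <;> split_ifs at h ⊢ <;> omega
end
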